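/- Let $1 < r < 2$ and suppose $m$ satisfies $\|m\|_{Y(r',d/r)} \le B$. Let $Tf = \mathcal{F}^{-1}[m\widehat f]$ and let $S(g) = (\sum_{k \ge 0} |\mathbb{D}_k g|^2)^{1/2}$ be the dyadic martingale square function. Then there is a constant $A_r$ (depending on $r$, $d$ and the cutoffs) such that pointwise a.e., $S(Tf)(x) \le A_r B \, G_r(f)(x)$, where $G_r(f) = \big( \sum_{k \in \mathbb{Z}} (\mathfrak{M}[|L_k f|^r])^{2/r} \big)^{1/2}$, $\mathfrak{M} = M \circ M \circ M$ is the threefold Hardy–Littlewood maximal operator, and $L_k$ is the Littlewood–Paley operator $\widehat{L_k f}(\xi) = \psi(2^{-k}\xi)\widehat f(\xi)$ for a suitable bump $\psi$ equal to 1 on the support of $\phi$. -/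

import Mathlib

open MeasureTheory Metric ENNReal RealInnerProductSpace

noncomputable section

abbrev Vd (d : ℕ) := EuclideanSpace ℝ (Fin d)

/-- Fourier transform, defined by the (Bochner) integral. -/
def FT {d : ℕ} (g : Vd d → ℂ) (ξ : Vd d) : ℂ :=
  ∫ x, Complex.exp (-(2 * Real.pi * ⟪x, ξ⟫) * Complex.I) * g x

/-- Inverse Fourier transform, defined by the (Bochner) integral. -/
def FTinv {d : ℕ} (g : Vd d → ℂ) (x : Vd d) : ℂ :=
  ∫ ξ, Complex.exp ((2 * Real.pi * ⟪ξ, x⟫) * Complex.I) * g ξ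

/-- Hardy–Littlewood maximal function (of an `ℝ≥0∞`-valued function). -/
def HLMax {d : ℕ} (g : Vd d → ℝ≥0∞) (x : Vd d) : ℝ≥0∞ :=
  ⨆ (r : ℝ) (_ : 0 < r), (volume (ball x r))⁻¹ * ∫⁻ y in ball x r, g y

/-- The dyadic cube of generation `k` containing `x`. -/
def dyadCube {d : ℕ} (k : ℤ) (x : Vd d) : Set (Vd d) :=
  {y | ∀ i, ⌊(2:ℝ) ^ k * y i⌋ = ⌊(2:ℝ) ^ k * x i⌋}

/-- Dyadic conditional expectation at generation `k`. -/
def Ek {d : ℕ} (k : ℤ) (f : Vd d → ℂ) (x : Vd d) : ℂ :=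
  ((2:ℝ) ^ (k * (d : ℤ))) • ∫ y in dyadCube k x, f y

/-- The dyadic martingale square function `S(g) = (∑_{k≥0} |E_{k+1}g - E_k g|²)^{1/2}`. -/
def sqFun {d : ℕ} (g : Vd d → ℂ) (x : Vd d) : ℝ≥0∞ :=
  (∑' k : ℕ, (‖Ek ((k : ℤ) + 1) g x - Ek (k : ℤ) g x‖₊ : ℝ≥0∞) ^ 2) ^ (1/2 : ℝ)

/-- The family `η_ℓ`: `η_0`, and `η_ℓ = η_0(2^{-ℓ}·) - η_0(2^{-ℓ+1}·)` for `ℓ > 0`. -/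
def etaFam {d : ℕ} (η0 : Vd d → ℝ) : ℕ → Vd d → ℝ :=
  fun ℓ x => if ℓ = 0 then η0 x
    else η0 ((2:ℝ) ^ (-(ℓ:ℤ)) • x) - η0 ((2:ℝ) ^ (-(ℓ:ℤ) + 1) • x)

/-- The kernel pieces `H_{k,ℓ}[m] = η_ℓ · F^{-1}[φ m(2^k ·)]`. -/
def Hkl {d : ℕ} (φ : Vd d → ℝ) (η : ℕ → Vd d → ℝ) (m : Vd d → ℂ) (k : ℤ) (ℓ : ℕ) :
    Vd d → ℂ :=
  fun x => (η ℓ x : ℂ) * FTinv (fun ξ => (φ ξ : ℂ) * m ((2:ℝ) ^ k • ξ)) x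

/-- The `Y(q,α)` norm: `sup_k ∑_ℓ 2^{ℓα} ‖H_{k,ℓ}[m]‖_{L^q}`. -/
def Ynorm {d : ℕ} (φ : Vd d → ℝ) (η : ℕ → Vd d → ℝ) (q : ℝ≥0∞) (α : ℝ) (m : Vd d → ℂ) :
    ℝ≥0∞ :=
  ⨆ k : ℤ, ∑' ℓ : ℕ, ENNReal.ofReal ((2:ℝ) ^ ((ℓ : ℝ) * α)) *
    eLpNorm (Hkl φ η m k ℓ) q volume

open FourierTransform in
lemma FTinv_eq {d : ℕ} (g : Vd d → ℂ) : FTinv g = 𝓕⁻ g := by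
  funext x
  rw [Real.fourierInv_eq', FTinv]
  congr 1
  funext ξ
  simp

open FourierTransform in
lemma FT_eq {d : ℕ} (g : Vd d → ℂ) : FT g = 𝓕 g := by
  funext x
  rw [Real.fourier_eq', FT]
  congr 1
  funext ξ
  simp

lemma norm_exp_aux (t : ℝ) : ‖Complex.exp ((2 * Real.pi * (t : ℂ)) * Complex.I)‖ = 1 := by
  have := Complex.norm_exp_ofReal_mul_I (2 * Real.pi * t)
  push_cast at this
  exact this

lemma conv_lemma {d : ℕ} (a U : Vd d → ℂ) (ha : Integrable a) (hU : Integrable U) (y : Vd d) :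
    ∫ z, FTinv a z * U (y - z) = FTinv (fun ξ => a ξ * FT U ξ) y := by
  have h1 : ∀ z, FTinv a z * U (y - z)
      = ∫ ξ, Complex.exp ((2 * Real.pi * ⟪ξ, z⟫) * Complex.I) * (a ξ * U (y - z)) := by
    intro z
    rw [FTinv, ← integral_mul_const]
    congr 1
    funext ξ
    ring
  simp_rw [h1]
  rw [integral_integral_swap]
  · rw [FTinv]
    congr 1
    funext ξ
    rw [FT, ← integral_sub_left_eq_self _ volume y, ← integral_const_mul, ← integral_const_mul]
    congr 1
    funext z
    have : Complex.exp ((2 * Real.pi * ⟪ξ, y - z⟫) * Complex.I) =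
      Complex.exp ((2 * Real.pi * ⟪ξ, y⟫) * Complex.I) *
        Complex.exp (-(2 * Real.pi * ⟪z, ξ⟫) * Complex.I) := by
      rw [← Complex.exp_add, inner_sub_right, real_inner_comm z ξ]
      congr 1
      push_cast
      ring
    have h3 : y - (y - z) = z := by abel
    rw [this, h3]
    ring
  · have hUy : Integrable (fun z => U (y - z)) := hU.comp_sub_left y
    have h2 : Integrable (fun p : Vd d × Vd d => a p.2 * U (y - p.1)) (volume.prod volume) := by
      have := hUy.mul_prod ha
      simpa [mul_comm] using this
    refine h2.bdd_mul (c := 1) ?_ ?_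
    · apply Continuous.aestronglyMeasurable
      fun_prop
    · filter_upwards with p
      exact (norm_exp_aux _).le

/-- volume of the unit ball -/
def vB (d : ℕ) : ℝ≥0∞ := volume (ball (0 : Vd d) 1)

lemma vB_pos (d : ℕ) : vB d ≠ 0 := (measure_ball_pos _ _ one_pos).ne'

lemma vB_top (d : ℕ) : vB d ≠ ∞ := measure_ball_lt_top.ne

lemma vol_ball {d : ℕ} (x : Vd d) {ρ : ℝ} (hρ : 0 < ρ) :
    volume (ball x ρ) = ENNReal.ofReal (ρ ^ d) * vB d := by
  rw [Measure.addHaar_ball_of_pos volume x hρ, finrank_euclideanSpace_fin, vB]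

lemma lint_ball_le {d : ℕ} (G : Vd d → ℝ≥0∞) (x : Vd d) {ρ : ℝ} (hρ : 0 < ρ) :
    ∫⁻ y in ball x ρ, G y ≤ ENNReal.ofReal (ρ ^ d) * vB d * HLMax G x := by
  rw [← vol_ball x hρ]
  have h : (volume (ball x ρ))⁻¹ * ∫⁻ y in ball x ρ, G y ≤ HLMax G x :=
    le_iSup₂ (f := fun (r : ℝ) (_ : 0 < r) => (volume (ball x r))⁻¹ * ∫⁻ y in ball x r, G y) ρ hρ
  have h0 : volume (ball x ρ) ≠ 0 := (measure_ball_pos _ _ hρ).ne'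
  have h1 : volume (ball x ρ) ≠ ∞ := measure_ball_lt_top.ne
  calc ∫⁻ y in ball x ρ, G y
      = volume (ball x ρ) * ((volume (ball x ρ))⁻¹ * ∫⁻ y in ball x ρ, G y) := by
        rw [← mul_assoc, ENNReal.mul_inv_cancel h0 h1, one_mul]
    _ ≤ _ := by gcongr

lemma HLMax_le_of {d : ℕ} (G : Vd d → ℝ≥0∞) (x : Vd d) (c : ℝ≥0∞)
    (h : ∀ ρ : ℝ, 0 < ρ → ∫⁻ y in ball x ρ, G y ≤ volume (ball x ρ) * c) : HLMax G x ≤ c := by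
  refine iSup₂_le fun ρ hρ => ?_
  have h0 : volume (ball x ρ) ≠ 0 := (measure_ball_pos _ _ hρ).ne'
  have h1 : volume (ball x ρ) ≠ ∞ := measure_ball_lt_top.ne
  calc _ ≤ (volume (ball x ρ))⁻¹ * (volume (ball x ρ) * c) := by gcongr; exact h ρ hρ
    _ = c := by rw [← mul_assoc, ENNReal.inv_mul_cancel h0 h1, one_mul]

lemma lint_ball_le' {d : ℕ} (G : Vd d → ℝ≥0∞) (x : Vd d) {ρ : ℝ} (hρ : 0 < ρ) :
    ∫⁻ y in ball x ρ, G y ≤ volume (ball x ρ) * HLMax G x := by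
  rw [vol_ball x hρ]; exact lint_ball_le G x hρ

lemma HLMax_mono {d : ℕ} {G H : Vd d → ℝ≥0∞} (h : ∀ x, G x ≤ H x) (x : Vd d) :
    HLMax G x ≤ HLMax H x := by
  refine HLMax_le_of _ _ _ fun ρ hρ => ?_
  exact (lintegral_mono fun y => h y).trans (lint_ball_le' H x hρ)

lemma HLMax_const_mul_le {d : ℕ} (c : ℝ≥0∞) (hc : c ≠ ∞) (G : Vd d → ℝ≥0∞) (x : Vd d) :
    HLMax (fun y => c * G y) x ≤ c * HLMax G x := by
  refine HLMax_le_of _ _ _ fun ρ hρ => ?_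
  rw [lintegral_const_mul' _ _ hc, mul_left_comm]
  gcongr
  exact lint_ball_le' G x hρ

lemma HLMax_le_HLMax2 {d : ℕ} (G : Vd d → ℝ≥0∞) (x : Vd d) :
    HLMax G x ≤ 2 ^ d * HLMax (HLMax G) x := by
  refine HLMax_le_of _ _ _ fun ρ hρ => ?_
  set c : ℝ≥0∞ := (volume (ball x ρ))⁻¹ * ∫⁻ y in ball x ρ, G y with hc
  have h0 : volume (ball x ρ) ≠ 0 := (measure_ball_pos _ _ hρ).ne'
  have h1 : volume (ball x ρ) ≠ ∞ := measure_ball_lt_top.ne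
  have h2 : ∀ y ∈ ball x ρ, c ≤ 2 ^ d * HLMax G y := by
    intro y hy
    have hsub : ball x ρ ⊆ ball y (2 * ρ) := by
      apply ball_subset_ball'
      rw [mem_ball, dist_comm] at hy
      linarith
    have h3 := (lintegral_mono_set (μ := volume) (f := G) hsub).trans
      (lint_ball_le' G y (by positivity : 0 < 2 * ρ))
    have h4 : volume (ball y (2 * ρ)) = volume (ball x ρ) * 2 ^ d := by
      rw [vol_ball y (by positivity), vol_ball x hρ, mul_pow, ENNReal.ofReal_mul (by positivity),
        ENNReal.ofReal_pow (by norm_num)]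
      simp only [ENNReal.ofReal_ofNat]
      ring
    rw [h4] at h3
    calc c ≤ (volume (ball x ρ))⁻¹ * (volume (ball x ρ) * 2 ^ d * HLMax G y) := by
          rw [hc]; gcongr
      _ = _ := by rw [← mul_assoc, ← mul_assoc, ENNReal.inv_mul_cancel h0 h1, one_mul]
  have h5 : c * volume (ball x ρ) = ∫⁻ y in ball x ρ, G y := by
    rw [hc, mul_right_comm, ENNReal.inv_mul_cancel h0 h1, one_mul]
  calc ∫⁻ y in ball x ρ, G y = ∫⁻ y in ball x ρ, c := by
        rw [setLIntegral_const, h5]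
    _ ≤ ∫⁻ y in ball x ρ, 2 ^ d * HLMax G y := setLIntegral_mono' measurableSet_ball h2
    _ = 2 ^ d * ∫⁻ y in ball x ρ, HLMax G y := lintegral_const_mul' _ _ (by simp)
    _ ≤ 2 ^ d * (volume (ball x ρ) * HLMax (HLMax G) x) := by
        gcongr; exact lint_ball_le' _ x hρ
    _ = _ := by ring

lemma lint_smul {d : ℕ} (G : Vd d → ℝ≥0∞) {s : ℝ} (hs : 0 < s) (x : Vd d) (ρ : ℝ) :
    ∫⁻ y in ball (s • x) (s * ρ), G y
      = ENNReal.ofReal (s ^ d) * ∫⁻ y in ball x ρ, G (s • y) := by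
  have hE : MeasurableEmbedding (fun y : Vd d => s • y) :=
    (Homeomorph.smulOfNeZero s hs.ne').measurableEmbedding
  have h1 : ∫⁻ y in ball (s • x) (s * ρ), G y ∂(Measure.map (fun y : Vd d => s • y) volume) =
      ∫⁻ y in (fun y : Vd d => s • y) ⁻¹' ball (s • x) (s * ρ), G (s • y) := by
    rw [hE.restrict_map, hE.lintegral_map]
  rw [Measure.map_addHaar_smul volume hs.ne', finrank_euclideanSpace_fin] at h1
  have h2 : (fun y : Vd d => s • y) ⁻¹' ball (s • x) (s * ρ) = ball x ρ := by
    ext y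
    simp only [Set.mem_preimage, mem_ball, dist_smul₀, Real.norm_of_nonneg hs.le]
    exact mul_lt_mul_iff_right₀ hs
  rw [h2, Measure.restrict_smul, lintegral_smul_measure, smul_eq_mul] at h1
  rw [← h1, ← mul_assoc, ← ENNReal.ofReal_mul (by positivity), abs_of_pos (by positivity),
    mul_inv_cancel₀ (by positivity)]
  simp

lemma HLMax_smul_le {d : ℕ} (G : Vd d → ℝ≥0∞) {s : ℝ} (hs : 0 < s) (x : Vd d) :
    HLMax G (s • x) ≤ HLMax (fun y => G (s • y)) x := by
  refine HLMax_le_of _ _ _ fun ρ hρ => ?_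
  have h : ρ = s * (s⁻¹ * ρ) := by field_simp
  have hp : 0 < s⁻¹ * ρ := by positivity
  rw [h, lint_smul G hs]
  refine (mul_le_mul_right (lint_ball_le' (fun y => G (s • y)) x hp) _).trans ?_
  rw [vol_ball x hp, vol_ball (s • x) (by positivity), mul_pow s, ENNReal.ofReal_mul (by positivity)]
  apply le_of_eq
  ring

lemma HLMax3_smul_le {d : ℕ} (G : Vd d → ℝ≥0∞) {s : ℝ} (hs : 0 < s) (x : Vd d) :
    HLMax (HLMax (HLMax G)) (s • x) ≤ HLMax (HLMax (HLMax (fun y => G (s • y)))) x := by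
  refine (HLMax_smul_le _ hs x).trans (HLMax_mono (fun y => ?_) x)
  refine (HLMax_smul_le _ hs y).trans (HLMax_mono (fun z => ?_) y)
  exact HLMax_smul_le _ hs z

lemma holder_set {d : ℕ} {r : ℝ} (hr : 1 < r) (S : Set (Vd d)) (G : Vd d → ℝ≥0∞)
    (hG : AEMeasurable G) :
    ∫⁻ y in S, G y ≤ (∫⁻ y in S, G y ^ r) ^ (1 / r) * (volume S) ^ (1 - 1 / r) := by
  have hc : r.HolderConjugate (r / (r - 1)) := Real.HolderConjugate.conjExponent hr
  have h := ENNReal.lintegral_mul_le_Lp_mul_Lq (volume.restrict S) hc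
    (f := G) (g := fun _ => 1) hG.restrict aemeasurable_const
  have h2 : 1 / (r / (r - 1)) = 1 - 1 / r := by
    have : r ≠ 0 := by positivity
    have : r - 1 ≠ 0 := by linarith
    field_simp
  rw [h2] at h
  simpa using h

lemma HLMax_jensen {d : ℕ} {r : ℝ} (hr : 1 < r) (G : Vd d → ℝ≥0∞)
    (hG : AEMeasurable G) (x : Vd d) :
    HLMax G x ≤ (HLMax (fun y => G y ^ r) x) ^ (1 / r) := by
  refine HLMax_le_of _ _ _ fun ρ hρ => ?_
  have h0 : volume (ball x ρ) ≠ 0 := (measure_ball_pos _ _ hρ).ne'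
  have h1 : volume (ball x ρ) ≠ ∞ := measure_ball_lt_top.ne
  have hr0 : 0 < r := by linarith
  refine (holder_set hr _ G hG).trans ?_
  have h2 := lint_ball_le' (fun y => G y ^ r) x hρ
  calc _ ≤ (volume (ball x ρ) * HLMax (fun y => G y ^ r) x) ^ (1 / r)
        * (volume (ball x ρ)) ^ (1 - 1 / r) := by gcongr
    _ = _ := by
      rw [ENNReal.mul_rpow_of_nonneg _ _ (by positivity), mul_right_comm,
        ← ENNReal.rpow_add _ _ h0 h1]
      simp

/-- constant in the weighted bound -/
def cW (d : ℕ) : ℝ≥0∞ := vB d * ∑' R : ℕ, ENNReal.ofReal (1 / ((R : ℝ) + 1) ^ 2)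

lemma cW_top (d : ℕ) : cW d ≠ ∞ := by
  refine ENNReal.mul_ne_top (vB_top d) ?_
  have : Summable (fun R : ℕ => 1 / ((R : ℝ) + 1) ^ 2) := by
    have := (summable_nat_add_iff 1).2 (Real.summable_one_div_nat_pow.2 (by norm_num : 1 < 2))
    simpa using this
  exact this.tsum_ofReal_ne_top

lemma weight_bound {d : ℕ} (G : Vd d → ℝ≥0∞) (hG : AEMeasurable G) (x : Vd d) :
    ∫⁻ z, ENNReal.ofReal (((1 + ‖x - z‖) ^ (d + 2))⁻¹) * G z ≤ cW d * HLMax G x := by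
  have h1 : ∀ z, ENNReal.ofReal (((1 + ‖x - z‖) ^ (d + 2))⁻¹) * G z ≤
      ∑' R : ℕ, ENNReal.ofReal ((((R : ℝ) + 1) ^ (d + 2))⁻¹) *
        (ball x ((R : ℝ) + 1)).indicator G z := by
    intro z
    refine le_trans ?_ (ENNReal.le_tsum ⌊‖x - z‖⌋₊)
    have hz : z ∈ ball x ((⌊‖x - z‖⌋₊ : ℝ) + 1) := by
      rw [mem_ball, dist_comm, dist_eq_norm]
      exact Nat.lt_floor_add_one _
    rw [Set.indicator_of_mem hz]
    gcongr ENNReal.ofReal (?_) * _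
    have := Nat.floor_le (norm_nonneg (x - z))
    gcongr ?_⁻¹
    refine pow_le_pow_left₀ (by positivity) (by linarith) _
  refine (lintegral_mono h1).trans ?_
  rw [lintegral_tsum]
  · rw [cW, mul_comm (vB d), mul_assoc, ← ENNReal.tsum_mul_right]
    refine ENNReal.tsum_le_tsum fun R => ?_
    rw [lintegral_const_mul' _ _ ofReal_ne_top, lintegral_indicator measurableSet_ball]
    refine (mul_le_mul_right (lint_ball_le G x (by positivity : (0:ℝ) < (R : ℝ) + 1)) _).trans ?_
    rw [← mul_assoc, ← mul_assoc, ← ENNReal.ofReal_mul (by positivity), mul_assoc]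
    apply le_of_eq
    congr 2
    have : (R : ℝ) + 1 ≠ 0 := by positivity
    field_simp
    ring
  · intro R
    exact (hG.indicator measurableSet_ball).const_mul _

lemma eta_sum {d : ℕ} (η0 : Vd d → ℝ) (x : Vd d) (N : ℕ) :
    ∑ ℓ ∈ Finset.range (N + 1), etaFam η0 ℓ x = η0 ((2:ℝ) ^ (-(N:ℤ)) • x) := by
  induction N with
  | zero => simp [etaFam]
  | succ n ih =>
    rw [Finset.sum_range_succ, ih]
    simp only [etaFam, Nat.add_eq_zero_iff, one_ne_zero, and_false, if_false]
    have : (-((n + 1 : ℕ) : ℤ) + 1) = -(n : ℤ) := by push_cast; ring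
    rw [this]
    ring

lemma one_le_eta {d : ℕ} (η0 : Vd d → ℝ) (hη01 : ∀ x : Vd d, ‖x‖ ≤ 1/2 → η0 x = 1) (x : Vd d) :
    1 ≤ ∑' ℓ : ℕ, ‖(etaFam η0 ℓ x : ℂ)‖ₑ := by
  obtain ⟨N, hN⟩ := pow_unbounded_of_one_lt (2 * ‖x‖) (by norm_num : (1:ℝ) < 2)
  have h1 : η0 ((2:ℝ) ^ (-(N:ℤ)) • x) = 1 := by
    apply hη01
    rw [norm_smul, norm_zpow, zpow_neg, zpow_natCast, Real.norm_ofNat]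
    rw [inv_mul_le_iff₀ (by positivity)]
    linarith
  rw [← eta_sum η0 x N] at h1
  refine le_trans ?_ (ENNReal.sum_le_tsum (Finset.range (N + 1)))
  refine le_trans ?_ (enorm_sum_le _ _)
  rw [← Complex.ofReal_sum, h1]
  simp

lemma eta_supp {d : ℕ} (η0 : Vd d → ℝ) (hη0s : Function.support η0 ⊆ closedBall 0 1) (ℓ : ℕ)
    (x : Vd d) (hx : etaFam η0 ℓ x ≠ 0) : ‖x‖ < 2 ^ (ℓ + 1) := by
  have key : ∀ j : ℤ, η0 ((2:ℝ) ^ (-j) • x) ≠ 0 → ‖x‖ ≤ 2 ^ j := by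
    intro j hj
    have := hη0s hj
    rw [mem_closedBall, dist_zero_right, norm_smul, norm_zpow, zpow_neg, Real.norm_ofNat,
      inv_mul_le_iff₀ (by positivity)] at this
    simpa using this
  have hlt : (2:ℝ) ^ (ℓ:ℤ) < 2 ^ (ℓ + 1) := by
    rw [zpow_natCast]
    exact pow_lt_pow_right₀ (by norm_num) (Nat.lt_succ_self _)
  rcases Nat.eq_zero_or_pos ℓ with h0 | h0
  · subst h0
    have := key 0 (by simpa [etaFam] using hx)
    refine lt_of_le_of_lt (by simpa using this) (by norm_num)
  · simp only [etaFam, h0.ne', if_false] at hx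
    by_cases h : η0 ((2:ℝ) ^ (-(ℓ:ℤ)) • x) = 0
    · have h2 : η0 ((2:ℝ) ^ (-((ℓ:ℤ) - 1)) • x) ≠ 0 := by
        intro h3
        apply hx
        rw [h, show (-(ℓ:ℤ) + 1) = -((ℓ:ℤ) - 1) by ring, h3, sub_zero]
      refine (key _ h2).trans_lt (lt_trans ?_ hlt)
      exact zpow_lt_zpow_right₀ (by norm_num) (by linarith)
    · exact (key _ h).trans_lt hlt

/-- constant in step 1 -/
def c1 (d : ℕ) (r : ℝ) : ℝ≥0∞ := (2 ^ d * vB d) ^ (1 / r)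

lemma c1_top (d : ℕ) (r : ℝ) (hr : 1 < r) : c1 d r ≠ ∞ := by
  apply ENNReal.rpow_ne_top_of_nonneg (by positivity)
  exact ENNReal.mul_ne_top (by simp) (vB_top d)

lemma step1_piece {d : ℕ} {r : ℝ} (hr : 1 < r) (ℓ : ℕ) (H u : Vd d → ℂ)
    (hH : AEMeasurable H) (hu : Continuous u) (hs : ∀ x, H x ≠ 0 → ‖x‖ < 2 ^ (ℓ + 1))
    (y : Vd d) :
    ∫⁻ z, ‖H z‖ₑ * ‖u (y - z)‖ₑ ≤ c1 d r *
      (ENNReal.ofReal ((2:ℝ) ^ ((ℓ : ℝ) * ((d : ℝ) / r))) *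
        eLpNorm H (ENNReal.ofReal (r / (r - 1))) volume) *
      (HLMax (fun y => ‖u y‖ₑ ^ r) y) ^ (1 / r) := by
  have hr0 : 0 < r := by linarith
  have hc : r.HolderConjugate (r / (r - 1)) := Real.HolderConjugate.conjExponent hr
  have hq0 : 0 < r / (r - 1) := hc.symm.pos
  set g : Vd d → ℝ≥0∞ := (ball y (2 ^ (ℓ + 1))).indicator (fun z => ‖u z‖ₑ) with hg
  have hgm : Measurable g := (hu.enorm.measurable).indicator measurableSet_ball
  have h1 : ∀ z, ‖H z‖ₑ * ‖u (y - z)‖ₑ ≤ ‖H z‖ₑ * g (y - z) := by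
    intro z
    by_cases hz : H z = 0
    · simp [hz]
    · have : y - z ∈ ball y (2 ^ (ℓ + 1)) := by
        simpa [mem_ball, dist_eq_norm] using hs z hz
      rw [hg, Set.indicator_of_mem this]
  refine (lintegral_mono h1).trans ?_
  refine (ENNReal.lintegral_mul_le_Lp_mul_Lq volume hc.symm hH.enorm
    (hgm.comp (measurable_const.sub measurable_id)).aemeasurable).trans ?_
  have h2 : ∫⁻ z, ((g ∘ ((fun _ => y) - id)) z) ^ r = ∫⁻ z in ball y (2 ^ (ℓ + 1)), ‖u z‖ₑ ^ r := by
    have := lintegral_sub_left_eq_self (μ := (volume : Measure (Vd d))) (fun z => g z ^ r) y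
    refine Eq.trans ?_ (this.trans ?_)
    · rfl
    · rw [← lintegral_indicator measurableSet_ball]
      congr 1
      funext z
      by_cases hz : z ∈ ball y (2 ^ (ℓ + 1)) <;> simp [hg, hz, hr0]
  have h3 : (∫⁻ z, ‖H z‖ₑ ^ (r / (r - 1))) ^ (1 / (r / (r - 1))) =
      eLpNorm H (ENNReal.ofReal (r / (r - 1))) volume := by
    rw [eLpNorm_eq_lintegral_rpow_enorm_toReal (by simpa using hq0) (by simp),
      ENNReal.toReal_ofReal hq0.le]
  rw [h3, h2]
  have h4 := lint_ball_le (fun z => ‖u z‖ₑ ^ r) y (by positivity : (0:ℝ) < 2 ^ (ℓ + 1))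
  have h5 : (ENNReal.ofReal (((2:ℝ) ^ (ℓ + 1)) ^ d) * vB d) ^ (1 / r) =
      c1 d r * ENNReal.ofReal ((2:ℝ) ^ ((ℓ : ℝ) * ((d : ℝ) / r))) := by
    rw [c1]
    have : ENNReal.ofReal ((2:ℝ) ^ ((ℓ : ℝ) * ((d : ℝ) / r))) =
        (ENNReal.ofReal (((2:ℝ) ^ ℓ) ^ d)) ^ (1 / r) := by
      rw [ENNReal.ofReal_rpow_of_nonneg (by positivity) (by positivity)]
      congr 1
      rw [← pow_mul, ← Real.rpow_natCast, ← Real.rpow_mul (by norm_num)]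
      congr 1
      push_cast
      ring
    rw [this, ← ENNReal.mul_rpow_of_nonneg _ _ (by positivity)]
    congr 1
    rw [pow_succ, mul_pow, ENNReal.ofReal_mul (by positivity),
      ENNReal.ofReal_pow (by norm_num : (0:ℝ) ≤ 2)]
    simp only [ENNReal.ofReal_ofNat]
    ring
  calc _ ≤ eLpNorm H (ENNReal.ofReal (r / (r - 1))) volume *
        (ENNReal.ofReal (((2:ℝ) ^ (ℓ + 1)) ^ d) * vB d * HLMax (fun z => ‖u z‖ₑ ^ r) y) ^ (1 / r) := by
        gcongr
    _ = _ := by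
        rw [ENNReal.mul_rpow_of_nonneg _ _ (by positivity : 0 ≤ 1 / r), h5]
        ring

lemma step1 {d : ℕ} {r : ℝ} (hr : 1 < r) (η0 : Vd d → ℝ) (hη0 : Continuous η0)
    (hη01 : ∀ x : Vd d, ‖x‖ ≤ 1/2 → η0 x = 1)
    (hη0s : Function.support η0 ⊆ closedBall 0 1) (K u : Vd d → ℂ)
    (hK : Continuous K) (hu : Continuous u) (y : Vd d) :
    ∫⁻ z, ‖K z‖ₑ * ‖u (y - z)‖ₑ ≤ c1 d r *
      (∑' ℓ : ℕ, ENNReal.ofReal ((2:ℝ) ^ ((ℓ : ℝ) * ((d : ℝ) / r))) *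
        eLpNorm (fun x => (etaFam η0 ℓ x : ℂ) * K x) (ENNReal.ofReal (r / (r - 1))) volume) *
      (HLMax (fun y => ‖u y‖ₑ ^ r) y) ^ (1 / r) := by
  have hηc : ∀ ℓ, Continuous (fun x => (etaFam η0 ℓ x : ℂ)) := by
    intro ℓ
    apply Complex.continuous_ofReal.comp
    unfold etaFam
    split_ifs <;> fun_prop
  have h1 : ∀ z, ‖K z‖ₑ * ‖u (y - z)‖ₑ ≤
      ∑' ℓ : ℕ, ‖(etaFam η0 ℓ z : ℂ) * K z‖ₑ * ‖u (y - z)‖ₑ := by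
    intro z
    simp_rw [enorm_mul, mul_assoc]
    rw [ENNReal.tsum_mul_right]
    calc _ = 1 * (‖K z‖ₑ * ‖u (y - z)‖ₑ) := (one_mul _).symm
      _ ≤ _ := by gcongr; exact one_le_eta η0 hη01 z
  refine (lintegral_mono h1).trans ?_
  rw [lintegral_tsum, ← ENNReal.tsum_mul_left, ← ENNReal.tsum_mul_right]
  · refine ENNReal.tsum_le_tsum fun ℓ => ?_
    refine step1_piece hr ℓ _ u ((hηc ℓ).mul hK).measurable.aemeasurable hu ?_ y
    intro x hx
    apply eta_supp η0 hη0s ℓ x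
    intro h
    simp [h] at hx
  · intro ℓ
    apply Measurable.aemeasurable
    exact (((hηc ℓ).mul hK).enorm.measurable).mul
      ((hu.comp (continuous_const.sub continuous_id)).enorm.measurable)

lemma kernel_diff {d : ℕ} (Ψ : SchwartzMap (Vd d) ℂ) :
    ∃ C : ℝ, 0 ≤ C ∧ ∀ h w : Vd d, ‖h‖ ≤ d →
      ‖Ψ (w + h) - Ψ w‖ ≤ C * ‖h‖ * ((1 + ‖w‖) ^ (d + 2))⁻¹ := by
  obtain ⟨C0, hC0, hb⟩ : ∃ C0 : ℝ, 0 ≤ C0 ∧ ∀ v, (1 + ‖v‖) ^ (d + 2) * ‖fderiv ℝ Ψ v‖ ≤ C0 := by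
    have key : ∀ v, (1 + ‖v‖) ^ (d + 2) * ‖fderiv ℝ Ψ v‖ ≤ 2 ^ (d + 2) *
        (Finset.Iic (d + 2, 1)).sup (fun m => SchwartzMap.seminorm ℝ m.1 m.2) Ψ := by
      intro v
      have := SchwartzMap.one_add_le_sup_seminorm_apply (𝕜 := ℝ) (m := (d + 2, 1)) (k := d + 2)
        (n := 1) le_rfl le_rfl Ψ v
      rw [norm_iteratedFDeriv_one] at this
      exact this
    exact ⟨_, le_trans (by positivity) (key 0), key⟩
  refine ⟨C0 * (1 + d) ^ (d + 2), by positivity, fun h w hh => ?_⟩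
  have hconv := (convex_closedBall w ‖h‖).norm_image_sub_le_of_norm_fderiv_le (𝕜 := ℝ) (f := Ψ)
    (C := C0 * (1 + d) ^ (d + 2) * ((1 + ‖w‖) ^ (d + 2))⁻¹) (x := w) (y := w + h)
    (fun v _ => Ψ.differentiableAt) ?_ (by simp) (by simp)
  · refine hconv.trans (le_of_eq ?_)
    rw [add_sub_cancel_left]
    ring
  · intro v hv
    have hv' : ‖v - w‖ ≤ d := by
      rw [mem_closedBall, dist_eq_norm] at hv
      exact hv.trans hh
    have h1 : 1 + ‖w‖ ≤ (1 + d) * (1 + ‖v‖) := by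
      have : ‖w‖ ≤ ‖v‖ + ‖v - w‖ := by
        have := norm_sub_le v (v - w)
        simpa using this
      nlinarith [norm_nonneg v, norm_nonneg (v - w)]
    have h2 : (1 + ‖w‖) ^ (d + 2) ≤ (1 + d) ^ (d + 2) * (1 + ‖v‖) ^ (d + 2) := by
      rw [← mul_pow]
      exact pow_le_pow_left₀ (by positivity) h1 _
    have h3 := hb v
    rw [← div_eq_mul_inv, le_div_iff₀ (by positivity)]
    calc _ ≤ ‖fderiv ℝ Ψ v‖ * ((1 + d) ^ (d + 2) * (1 + ‖v‖) ^ (d + 2)) := by gcongr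
      _ = (1 + d) ^ (d + 2) * ((1 + ‖v‖) ^ (d + 2) * ‖fderiv ℝ Ψ v‖) := by ring
      _ ≤ (1 + d) ^ (d + 2) * C0 := by gcongr
      _ = _ := by ring

lemma smooth_diff {d : ℕ} (Ψ : SchwartzMap (Vd d) ℂ) :
    ∃ C : ℝ, 0 ≤ C ∧ ∀ g : Vd d → ℂ, Continuous g → (∃ b : ℝ, ∀ x, ‖g x‖ ≤ b) →
      (∀ y, ∫ z, g z * Ψ (y - z) = g y) → ∀ x y, ‖y - x‖ ≤ d →
      ‖g y - g x‖ₑ ≤ ENNReal.ofReal (C * ‖y - x‖) * (cW d * HLMax (fun z => ‖g z‖ₑ) x) := by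
  obtain ⟨C, hC, hk⟩ := kernel_diff Ψ
  refine ⟨C, hC, fun g hg ⟨b, hb⟩ hrep x y hxy => ?_⟩
  have hInt0 : ∀ y, Integrable (fun z => g z * Ψ (y - z)) := by
    intro y
    refine (Ψ.integrable.comp_sub_left y).bdd_mul (c := b) hg.aestronglyMeasurable ?_
    filter_upwards with z using hb z
  rw [← hrep y, ← hrep x, ← integral_sub (hInt0 y) (hInt0 x)]
  refine (enorm_integral_le_lintegral_enorm _).trans ?_
  have h1 : ∀ z, ‖g z * Ψ (y - z) - g z * Ψ (x - z)‖ₑ ≤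
      ENNReal.ofReal (C * ‖y - x‖) *
        (ENNReal.ofReal (((1 + ‖x - z‖) ^ (d + 2))⁻¹) * ‖g z‖ₑ) := by
    intro z
    rw [← mul_sub, enorm_mul, mul_comm, ← mul_assoc, ← ENNReal.ofReal_mul (by positivity)]
    gcongr
    rw [← ofReal_norm]
    apply ENNReal.ofReal_le_ofReal
    have := hk (y - x) (x - z) hxy
    have h2 : x - z + (y - x) = y - z := by abel
    rwa [h2] at this
  refine (lintegral_mono h1).trans ?_
  rw [lintegral_const_mul' _ _ ofReal_ne_top]
  gcongr
  exact weight_bound _ hg.enorm.measurable.aemeasurable x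

/-- side interval -/
def sideI {d : ℕ} (k : ℤ) (x : Vd d) (i : Fin d) : Set ℝ :=
  Set.Ico ((2:ℝ) ^ (-k) * ⌊(2:ℝ) ^ k * x i⌋) ((2:ℝ) ^ (-k) * ⌊(2:ℝ) ^ k * x i⌋ + (2:ℝ) ^ (-k))

lemma mem_dyadCube {d : ℕ} (k : ℤ) (x y : Vd d) :
    y ∈ dyadCube k x ↔ ∀ i, y i ∈ sideI k x i := by
  have hk : (0:ℝ) < 2 ^ k := by positivity
  simp only [dyadCube, Set.mem_ofPred_eq, sideI, Set.mem_Ico]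
  refine forall_congr' fun i => ?_
  rw [Int.floor_eq_iff, zpow_neg, inv_mul_le_iff₀ hk, ← mul_add_one, lt_inv_mul_iff₀ hk]

lemma self_mem_dyadCube {d : ℕ} (k : ℤ) (x : Vd d) : x ∈ dyadCube k x := fun _ => rfl

lemma vol_box {d : ℕ} (J : Fin d → Set ℝ) (hJ : ∀ i, MeasurableSet (J i)) :
    volume {y : Vd d | ∀ i, y i ∈ J i} = ∏ i, volume (J i) := by
  have h := (PiLp.volume_preserving_ofLp (Fin d)).measure_preimage
    (s := Set.univ.pi J) (MeasurableSet.univ_pi hJ).nullMeasurableSet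
  rw [← volume_pi_pi J, ← h]
  congr 1
  ext y
  simp

lemma meas_box {d : ℕ} (J : Fin d → Set ℝ) (hJ : ∀ i, MeasurableSet (J i)) :
    MeasurableSet {y : Vd d | ∀ i, y i ∈ J i} := by
  have : {y : Vd d | ∀ i, y i ∈ J i} = ⋂ i, (fun y : Vd d => y i) ⁻¹' (J i) := by
    ext y; simp
  rw [this]
  refine MeasurableSet.iInter fun i => ?_
  exact (by fun_prop : Measurable (fun y : Vd d => y i)) (hJ i)

lemma dyadCube_eq {d : ℕ} (k : ℤ) (x : Vd d) :
    dyadCube k x = {y : Vd d | ∀ i, y i ∈ sideI k x i} := by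
  ext y; exact mem_dyadCube k x y

lemma meas_dyadCube {d : ℕ} (k : ℤ) (x : Vd d) : MeasurableSet (dyadCube k x) := by
  rw [dyadCube_eq]
  exact meas_box _ fun i => measurableSet_Ico

lemma vol_sideI {d : ℕ} (k : ℤ) (x : Vd d) (i : Fin d) :
    volume (sideI k x i) = ENNReal.ofReal ((2:ℝ) ^ (-k)) := by
  rw [sideI, Real.volume_Ico]; congr 1; ring

lemma vol_dyadCube {d : ℕ} (k : ℤ) (x : Vd d) :
    volume (dyadCube k x) = ENNReal.ofReal ((2:ℝ) ^ (-k)) ^ d := by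
  rw [dyadCube_eq, vol_box (sideI k x) fun i => measurableSet_Ico]
  simp [vol_sideI]

lemma dyadCube_dist {d : ℕ} (k : ℤ) (x y : Vd d) (hy : y ∈ dyadCube k x) :
    ‖y - x‖ ≤ d * (2:ℝ) ^ (-k) := by
  have h1 : ∀ i, |y i - x i| ≤ (2:ℝ) ^ (-k) := by
    intro i
    have a := (mem_dyadCube k x y).1 hy i
    have b := (mem_dyadCube k x x).1 (self_mem_dyadCube k x) i
    simp only [sideI, Set.mem_Ico] at a b
    rw [abs_le]
    constructor <;> linarith [a.1, a.2, b.1, b.2]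
  rw [EuclideanSpace.norm_eq]
  apply Real.sqrt_le_iff.2
  refine ⟨by positivity, ?_⟩
  calc ∑ i, ‖(y - x) i‖ ^ 2 ≤ ∑ i : Fin d, ((2:ℝ) ^ (-k)) ^ 2 := by
        refine Finset.sum_le_sum fun i _ => ?_
        have := h1 i
        simp only [PiLp.sub_apply, Real.norm_eq_abs]
        gcongr
    _ = d * ((2:ℝ) ^ (-k)) ^ 2 := by simp
    _ ≤ (d * (2:ℝ) ^ (-k)) ^ 2 := by
        rw [mul_pow]
        gcongr
        rcases Nat.eq_zero_or_pos d with h | h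
        · subst h; simp
        · have : (1:ℝ) ≤ d := by exact_mod_cast h
          nlinarith

lemma Ek_const_aux {d : ℕ} (k : ℤ) : ENNReal.ofReal ((2:ℝ) ^ (k * (d : ℤ))) *
    ENNReal.ofReal ((2:ℝ) ^ (-k)) ^ d = 1 := by
  rw [← ENNReal.ofReal_pow (by positivity), ← ENNReal.ofReal_mul (by positivity),
    ← zpow_natCast, ← zpow_mul, ← zpow_add₀ (by norm_num)]
  simp

lemma intOn_dyadCube {d : ℕ} (k : ℤ) (x : Vd d) (g : Vd d → ℂ) (hg : Continuous g) (b : ℝ)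
    (hb : ∀ x, ‖g x‖ ≤ b) : IntegrableOn g (dyadCube k x) := by
  refine Measure.integrableOn_of_bounded (M := b) ?_ hg.aestronglyMeasurable ?_
  · rw [vol_dyadCube]; exact ENNReal.pow_ne_top ofReal_ne_top
  · filter_upwards with y using hb y

lemma Ek_sub_le {d : ℕ} (k : ℤ) (x : Vd d) (g : Vd d → ℂ) (hg : Continuous g) (b : ℝ)
    (hb : ∀ x, ‖g x‖ ≤ b) (c : ℝ≥0∞) (hc : ∀ y ∈ dyadCube k x, ‖g y - g x‖ₑ ≤ c) :
    ‖Ek k g x - g x‖ₑ ≤ c := by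
  have hv : volume (dyadCube k x) ≠ ∞ := by
    rw [vol_dyadCube]; exact ENNReal.pow_ne_top ofReal_ne_top
  have h1 : Ek k g x - g x = ((2:ℝ) ^ (k * (d : ℤ))) • ∫ y in dyadCube k x, (g y - g x) := by
    rw [integral_sub (intOn_dyadCube k x g hg b hb) (integrableOn_const hv), smul_sub, Ek]
    congr 1
    rw [setIntegral_const, smul_smul, Measure.real, vol_dyadCube]
    have := congrArg ENNReal.toReal (Ek_const_aux (d := d) k)
    rw [ENNReal.toReal_mul, ENNReal.toReal_ofReal (by positivity)] at this
    rw [this]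
    simp
  rw [h1, enorm_smul]
  calc _ ≤ ‖(2:ℝ) ^ (k * (d : ℤ))‖ₑ * ∫⁻ y in dyadCube k x, c := by
        gcongr
        refine (enorm_integral_le_lintegral_enorm _).trans ?_
        exact setLIntegral_mono' (meas_dyadCube k x) hc
    _ = c := by
        rw [setLIntegral_const, vol_dyadCube, Real.enorm_of_nonneg (by positivity),
          mul_comm c, ← mul_assoc, Ek_const_aux, one_mul]

lemma step2a {d : ℕ} {r : ℝ} (hr : 1 < r) (Ψ : SchwartzMap (Vd d) ℂ) :
    ∃ C : ℝ≥0∞, C ≠ ∞ ∧ ∀ g : Vd d → ℂ, Continuous g → (∃ b : ℝ, ∀ x, ‖g x‖ ≤ b) →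
      (∀ y, ∫ z, g z * Ψ (y - z) = g y) → ∀ (j : ℤ) (x : Vd d), 0 ≤ j →
      ‖Ek j g x - g x‖ₑ ≤ C * ENNReal.ofReal ((2:ℝ) ^ (-j)) *
        (HLMax (fun z => ‖g z‖ₑ ^ r) x) ^ (1 / r) := by
  obtain ⟨C, hC, hk⟩ := smooth_diff Ψ
  refine ⟨ENNReal.ofReal (C * d) * cW d, ENNReal.mul_ne_top ofReal_ne_top (cW_top d), ?_⟩
  intro g hg hb hrep j x hj
  obtain ⟨b, hb'⟩ := id hb
  refine Ek_sub_le j x g hg b hb' _ fun y hy => ?_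
  have h1 := dyadCube_dist j x y hy
  have h2 : (2:ℝ) ^ (-j) ≤ 1 := zpow_le_one_of_nonpos₀ (by norm_num) (by linarith)
  have h3 := hk g hg hb hrep x y (h1.trans (mul_le_of_le_one_right (by positivity) h2))
  refine h3.trans ?_
  calc _ ≤ ENNReal.ofReal (C * (d * (2:ℝ) ^ (-j))) * (cW d *
        (HLMax (fun z => ‖g z‖ₑ ^ r) x) ^ (1 / r)) := by
        gcongr
        exact HLMax_jensen hr _ hg.enorm.measurable.aemeasurable x
    _ = _ := by
        rw [← mul_assoc C, ENNReal.ofReal_mul (by positivity)]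
        ring

lemma coord_le_norm {d : ℕ} (w : Vd d) (i : Fin d) : |w i| ≤ ‖w‖ := by
  simpa using PiLp.norm_apply_le w i

lemma vol_shift {d : ℕ} (k : ℤ) (x w : Vd d) :
    ENNReal.ofReal ((2:ℝ) ^ (-k)) * volume {z : Vd d | z ∈ dyadCube k x ∧ z + w ∉ dyadCube k x} ≤
      2 * d * ENNReal.ofReal ‖w‖ * ENNReal.ofReal ((2:ℝ) ^ (-k)) ^ d := by
  set L : ℝ := (2:ℝ) ^ (-k) with hL
  have hL0 : 0 < L := by positivity
  set J : Fin d → Set ℝ := fun i =>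
    Set.Ico (L * ⌊(2:ℝ) ^ k * x i⌋ + L - ‖w‖) (L * ⌊(2:ℝ) ^ k * x i⌋ + L) ∪
    Set.Ico (L * ⌊(2:ℝ) ^ k * x i⌋) (L * ⌊(2:ℝ) ^ k * x i⌋ + ‖w‖) with hJ
  set S : Fin d → Set (Vd d) := fun i =>
    {z | ∀ l, z l ∈ (if l = i then J i else sideI k x l)} with hS
  have hsub : {z : Vd d | z ∈ dyadCube k x ∧ z + w ∉ dyadCube k x} ⊆ ⋃ i, S i := by
    rintro z ⟨hz1, hz2⟩
    rw [mem_dyadCube] at hz1 hz2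
    push Not at hz2
    obtain ⟨i, hi⟩ := hz2
    refine Set.mem_iUnion.2 ⟨i, fun l => ?_⟩
    by_cases hl : l = i
    · subst hl
      simp only [if_true]
      have h1 := hz1 l
      have h2 := abs_le.1 (coord_le_norm w l)
      simp only [sideI, ← hL, Set.mem_Ico, PiLp.add_apply, not_and_or, not_le, not_lt] at h1 hi
      rcases hi with hi | hi
      · right; constructor <;> linarith [h1.1, h1.2]
      · left; constructor <;> linarith [h1.1, h1.2]
    · simp only [hl, if_false]; exact hz1 l
  have hvol : ∀ i, ENNReal.ofReal L * volume (S i) ≤ 2 * ENNReal.ofReal ‖w‖ * ENNReal.ofReal L ^ d := by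
    intro i
    have hm : ∀ l, MeasurableSet (if l = i then J i else sideI k x l) := by
      intro l
      split_ifs
      · exact measurableSet_Ico.union measurableSet_Ico
      · exact measurableSet_Ico
    rw [hS]
    simp only
    rw [vol_box _ hm, ← Finset.mul_prod_erase Finset.univ _ (Finset.mem_univ i)]
    have hJv : volume (J i) ≤ 2 * ENNReal.ofReal ‖w‖ := by
      refine (measure_union_le _ _).trans ?_
      rw [Real.volume_Ico, Real.volume_Ico, two_mul]
      gcongr <;> linarith
    have he : ∏ l ∈ Finset.univ.erase i, volume (if l = i then J i else sideI k x l) =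
        ∏ l ∈ Finset.univ.erase i, ENNReal.ofReal L := by
      refine Finset.prod_congr rfl fun l hl => ?_
      rw [if_neg (Finset.ne_of_mem_erase hl), vol_sideI]
    rw [he, if_pos rfl]
    calc _ = volume (J i) * (ENNReal.ofReal L * ∏ l ∈ Finset.univ.erase i, ENNReal.ofReal L) := by ring
      _ = volume (J i) * ENNReal.ofReal L ^ d := by
        rw [Finset.mul_prod_erase Finset.univ (fun _ => ENNReal.ofReal L) (Finset.mem_univ i)]
        simp
      _ ≤ _ := by gcongr
  calc _ ≤ ENNReal.ofReal L * ∑ i, volume (S i) := by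
        gcongr
        exact (measure_mono hsub).trans (measure_iUnion_fintype_le _ _)
    _ = ∑ i, ENNReal.ofReal L * volume (S i) := Finset.mul_sum _ _ _
    _ ≤ ∑ i : Fin d, 2 * ENNReal.ofReal ‖w‖ * ENNReal.ofReal L ^ d :=
        Finset.sum_le_sum fun i _ => hvol i
    _ = _ := by simp; ring

/-- symmetric difference of `Q` and `Q - w` -/
def symmQ {d : ℕ} (k : ℤ) (x w : Vd d) : Set (Vd d) :=
  {z : Vd d | z ∈ dyadCube k x ∧ z + w ∉ dyadCube k x} ∪
  {z : Vd d | z ∉ dyadCube k x ∧ z + w ∈ dyadCube k x}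

lemma meas_symmQ {d : ℕ} (k : ℤ) (x w : Vd d) : MeasurableSet (symmQ k x w) := by
  have h := meas_dyadCube k x
  have h2 : MeasurableSet ((fun z : Vd d => z + w) ⁻¹' dyadCube k x) :=
    (measurable_id.add_const w) h
  exact (h.inter h2.compl).union (h.compl.inter h2)

lemma vol_symmQ {d : ℕ} (k : ℤ) (x w : Vd d) :
    ENNReal.ofReal ((2:ℝ) ^ (-k)) * volume (symmQ k x w) ≤
      4 * d * ENNReal.ofReal ‖w‖ * ENNReal.ofReal ((2:ℝ) ^ (-k)) ^ d := by
  have h2 : volume {z : Vd d | z ∉ dyadCube k x ∧ z + w ∈ dyadCube k x} =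
      volume {z : Vd d | z ∈ dyadCube k x ∧ z + (-w) ∉ dyadCube k x} := by
    rw [← measure_preimage_add_right volume w
      {z : Vd d | z ∈ dyadCube k x ∧ z + (-w) ∉ dyadCube k x}]
    congr 1
    ext z
    simp [and_comm]
  have h3 := vol_shift k x w
  have h4 := vol_shift k x (-w)
  rw [norm_neg, ← h2] at h4
  refine (mul_le_mul_right (measure_union_le _ _) _).trans ?_
  rw [mul_add]
  refine (add_le_add h3 h4).trans (le_of_eq ?_)
  ring

lemma symmQ_sub {d : ℕ} (k : ℤ) (hk : k ≤ 0) (x w : Vd d) :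
    symmQ k x w ⊆ ball x ((2:ℝ) ^ (-k) * ((d + 1) * (1 + ‖w‖))) := by
  have hL : (1:ℝ) ≤ (2:ℝ) ^ (-k) := one_le_zpow₀ (by norm_num) (by linarith)
  have key : ∀ z, ‖z - x‖ ≤ d * (2:ℝ) ^ (-k) + ‖w‖ →
      z ∈ ball x ((2:ℝ) ^ (-k) * ((d + 1) * (1 + ‖w‖))) := by
    intro z hz
    rw [mem_ball, dist_eq_norm]
    refine hz.trans_lt ?_
    set L : ℝ := (2:ℝ) ^ (-k)
    have h1 : 0 ≤ L * (d * ‖w‖) := by positivity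
    have h2 : 0 ≤ (L - 1) * ‖w‖ := mul_nonneg (by linarith) (norm_nonneg w)
    nlinarith
  rintro z (⟨hz, -⟩ | ⟨-, hz⟩)
  · exact key z (by linarith [dyadCube_dist k x z hz, norm_nonneg w])
  · apply key
    have h1 := dyadCube_dist k x _ hz
    have h2 : z - x = (z + w - x) - w := by abel
    rw [h2]
    exact (norm_sub_le _ _).trans (by linarith)

lemma shift_bound {d : ℕ} {r : ℝ} (hr : 1 < r) (g : Vd d → ℂ) (hg : Continuous g)
    (b : ℝ) (hb : ∀ x, ‖g x‖ ≤ b) (k : ℤ) (hk : k ≤ 0) (x w : Vd d) :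
    ‖(∫ y in dyadCube k x, g (y - w)) - ∫ y in dyadCube k x, g y‖ₑ ≤
      (ENNReal.ofReal (d + 1) ^ d * vB d) ^ (1 / r) * (4 * d) ^ (1 - 1 / r) *
      ENNReal.ofReal ((1 + ‖w‖) ^ (d + 1)) *
      (ENNReal.ofReal ((2:ℝ) ^ (-k)) ^ d * ENNReal.ofReal ((2:ℝ) ^ k) ^ (1 - 1 / r)) *
      (HLMax (fun z => ‖g z‖ₑ ^ r) x) ^ (1 / r) := by
  have hr0 : 0 < r := by linarith
  have he0 : 0 ≤ 1 - 1 / r := by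
    rw [sub_nonneg, div_le_one hr0]; exact hr.le
  have hQ := meas_dyadCube k x
  have hi := intOn_dyadCube k x g hg b hb
  have hi2 := intOn_dyadCube k x (fun y => g (y - w)) (by fun_prop) b (fun y => hb _)
  have h1 : (∫ y in dyadCube k x, g (y - w)) = ∫ z, (dyadCube k x).indicator (fun y => g (y - w)) (z + w) := by
    rw [integral_add_right_eq_self (μ := volume) ((dyadCube k x).indicator (fun y => g (y - w))) w,
      integral_indicator hQ]
  rw [h1, ← integral_indicator hQ, ← integral_sub (((integrable_indicator_iff hQ).2 hi2).comp_add_right w)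
    ((integrable_indicator_iff hQ).2 hi)]
  refine (enorm_integral_le_lintegral_enorm _).trans ?_
  have h2 : ∫⁻ z, ‖(dyadCube k x).indicator (fun y => g (y - w)) (z + w) -
      (dyadCube k x).indicator (fun y => g y) z‖ₑ ≤ ∫⁻ z in symmQ k x w, ‖g z‖ₑ := by
    rw [← lintegral_indicator (meas_symmQ k x w)]
    refine lintegral_mono fun z => ?_
    by_cases ha : z ∈ dyadCube k x <;> by_cases hb : z + w ∈ dyadCube k x <;>
      simp [Set.indicator, ha, hb, symmQ]
  refine h2.trans ?_
  refine (holder_set hr _ (fun z => ‖g z‖ₑ) hg.enorm.measurable.aemeasurable).trans ?_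
  set L : ℝ := (2:ℝ) ^ (-k) with hL
  have hL0 : 0 < L := by positivity
  have hW : (1:ℝ) ≤ 1 + ‖w‖ := by linarith [norm_nonneg w]
  have h3 := (lintegral_mono_set (μ := volume) (f := fun z => ‖g z‖ₑ ^ r) (symmQ_sub k hk x w)).trans
    (lint_ball_le (fun z => ‖g z‖ₑ ^ r) x (by positivity))
  have h4 : volume (symmQ k x w) ≤
      ENNReal.ofReal ((2:ℝ) ^ k) * (4 * d * ENNReal.ofReal (1 + ‖w‖) * ENNReal.ofReal L ^ d) := by
    have h5 := vol_symmQ k x w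
    have h6 : ENNReal.ofReal ((2:ℝ) ^ k) * ENNReal.ofReal L = 1 := by
      rw [← ENNReal.ofReal_mul (by positivity), hL, ← zpow_add₀ (by norm_num)]; simp
    calc volume (symmQ k x w) = ENNReal.ofReal ((2:ℝ) ^ k) * (ENNReal.ofReal L * volume (symmQ k x w)) := by
          rw [← mul_assoc, h6, one_mul]
      _ ≤ ENNReal.ofReal ((2:ℝ) ^ k) * (4 * d * ENNReal.ofReal ‖w‖ * ENNReal.ofReal L ^ d) := by
          gcongr
      _ ≤ _ := by gcongr; linarith
  set W : ℝ≥0∞ := ENNReal.ofReal (1 + ‖w‖) with hWd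
  have hW1 : 1 ≤ W := by rw [hWd]; simp
  set M := HLMax (fun z => ‖g z‖ₑ ^ r) x
  set l : ℝ≥0∞ := ENNReal.ofReal L
  have hl0 : l ≠ 0 := by simpa [l] using hL0
  have hlt : l ≠ ∞ := ofReal_ne_top
  have h7 : ENNReal.ofReal ((L * ((d + 1) * (1 + ‖w‖))) ^ d) = l ^ d * (ENNReal.ofReal (d + 1) ^ d * W ^ d) := by
    rw [mul_pow, mul_pow, ENNReal.ofReal_mul (by positivity), ENNReal.ofReal_mul (by positivity),
      ENNReal.ofReal_pow hL0.le, ENNReal.ofReal_pow (by positivity), ENNReal.ofReal_pow (by positivity)]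
  rw [h7] at h3
  rw [ENNReal.ofReal_pow (by positivity : 0 ≤ 1 + ‖w‖)]
  have hWp : (W ^ d) ^ (1 / r) ≤ W ^ d := by
    have : (W ^ d) ^ (1 / r) ≤ (W ^ d) ^ (1:ℝ) :=
      ENNReal.rpow_le_rpow_of_exponent_le (one_le_pow₀ hW1) (by rw [div_le_one hr0]; exact hr.le)
    simpa using this
  have hWe : W ^ (1 - 1 / r) ≤ W := by
    have : W ^ (1 - 1 / r) ≤ W ^ (1:ℝ) :=
      ENNReal.rpow_le_rpow_of_exponent_le hW1 (by linarith [one_div_pos.2 hr0])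
    simpa using this
  have hl : (l ^ d) ^ (1 / r) * (l ^ d) ^ (1 - 1 / r) = l ^ d := by
    rw [← ENNReal.rpow_add _ _ (pow_ne_zero _ hl0) (ENNReal.pow_ne_top hlt)]
    simp
  have hr' : 0 ≤ 1 / r := by positivity
  calc _ ≤ (l ^ d * (ENNReal.ofReal (d + 1) ^ d * W ^ d) * vB d * M) ^ (1 / r) *
        (ENNReal.ofReal ((2:ℝ) ^ k) * (4 * d * W * l ^ d)) ^ (1 - 1 / r) := by gcongr
    _ = (ENNReal.ofReal (d + 1) ^ d * vB d) ^ (1 / r) * (4 * d) ^ (1 - 1 / r) *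
        ((W ^ d) ^ (1 / r) * W ^ (1 - 1 / r)) *
        (((l ^ d) ^ (1 / r) * (l ^ d) ^ (1 - 1 / r)) * ENNReal.ofReal ((2:ℝ) ^ k) ^ (1 - 1 / r)) *
        M ^ (1 / r) := by
        simp only [ENNReal.mul_rpow_of_nonneg _ _ hr', ENNReal.mul_rpow_of_nonneg _ _ he0]
        ring
    _ ≤ _ := by
        rw [hl, pow_succ]
        gcongr

lemma step2b {d : ℕ} {r : ℝ} (hr : 1 < r) (Ψ : SchwartzMap (Vd d) ℂ) (hΨ : ∫ w, Ψ w = 0) :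
    ∃ C : ℝ≥0∞, C ≠ ∞ ∧ ∀ g : Vd d → ℂ, Continuous g → (∃ b : ℝ, ∀ x, ‖g x‖ ≤ b) →
      (∀ y, ∫ z, g z * Ψ (y - z) = g y) → ∀ (j : ℤ) (x : Vd d), j ≤ 0 →
      ‖Ek j g x‖ₑ ≤ C * ENNReal.ofReal ((2:ℝ) ^ j) ^ (1 - 1 / r) *
        (HLMax (fun z => ‖g z‖ₑ ^ r) x) ^ (1 / r) := by
  have hr0 : 0 < r := by linarith
  have he0 : 0 ≤ 1 - 1 / r := by
    rw [sub_nonneg, div_le_one hr0]; exact hr.le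
  set c2 : ℝ≥0∞ := (ENNReal.ofReal (d + 1) ^ d * vB d) ^ (1 / r) * (4 * d) ^ (1 - 1 / r) with hc2
  have hc2t : c2 ≠ ∞ := by
    refine ENNReal.mul_ne_top (ENNReal.rpow_ne_top_of_nonneg (by positivity) ?_)
      (ENNReal.rpow_ne_top_of_nonneg he0 ?_)
    · exact ENNReal.mul_ne_top (ENNReal.pow_ne_top ofReal_ne_top) (vB_top d)
    · exact ENNReal.mul_ne_top (by simp) (by simp)
  set I : ℝ≥0∞ := ∫⁻ w, ‖Ψ w‖ₑ * ENNReal.ofReal ((1 + ‖w‖) ^ (d + 1)) with hI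
  have hIt : I ≠ ∞ := by
    have hInt0 : Integrable (fun w : Vd d => 2 ^ d * (‖w‖ ^ 0 * ‖Ψ w‖ + ‖w‖ ^ (d + 1) * ‖Ψ w‖)) :=
      ((Ψ.integrable_pow_mul volume 0).add (Ψ.integrable_pow_mul volume (d + 1))).const_mul _
    refine ne_top_of_le_ne_top hInt0.lintegral_lt_top.ne (lintegral_mono fun w => ?_)
    rw [← ofReal_norm, ← ENNReal.ofReal_mul (by positivity)]
    apply ENNReal.ofReal_le_ofReal
    have := add_pow_le (zero_le_one) (norm_nonneg w) (d + 1)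
    simp only [one_pow, Nat.add_sub_cancel] at this
    calc _ ≤ ‖Ψ w‖ * (2 ^ d * (1 + ‖w‖ ^ (d + 1))) := by gcongr
      _ = _ := by ring
  refine ⟨c2 * I, ENNReal.mul_ne_top hc2t hIt, ?_⟩
  intro g hg hbd hrep j x hj
  obtain ⟨b, hb⟩ := hbd
  set M := HLMax (fun z => ‖g z‖ₑ ^ r) x
  have hv : volume (dyadCube j x) ≠ ∞ := by
    rw [vol_dyadCube]; exact ENNReal.pow_ne_top ofReal_ne_top
  have : IsFiniteMeasure (volume.restrict (dyadCube j x)) := ⟨by simpa using hv.lt_top⟩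
  have hrep' : ∀ y, g y = ∫ w, g (y - w) * Ψ w := by
    intro y
    rw [← hrep y, ← integral_sub_left_eq_self _ volume y]
    congr 1
    funext w
    have : y - (y - w) = w := by abel
    rw [this]
  have hI2 : Integrable (fun p : Vd d × Vd d => g (p.1 - p.2) * Ψ p.2)
      ((volume.restrict (dyadCube j x)).prod volume) := by
    have h1 : Integrable (fun p : Vd d × Vd d => (1:ℂ) * Ψ p.2)
      ((volume.restrict (dyadCube j x)).prod volume) :=
      (integrable_const (1:ℂ)).mul_prod Ψ.integrable
    simp only [one_mul] at h1
    refine h1.bdd_mul (c := b) ?_ ?_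
    · exact (hg.comp (continuous_fst.sub continuous_snd)).aestronglyMeasurable
    · filter_upwards with p using hb _
  have hswap : ∫ y in dyadCube j x, g y =
      ∫ w, (∫ y in dyadCube j x, g (y - w)) * Ψ w := by
    calc _ = ∫ y in dyadCube j x, ∫ w, g (y - w) * Ψ w := by
          congr 1; funext y; exact hrep' y
      _ = ∫ w, ∫ y in dyadCube j x, g (y - w) * Ψ w := integral_integral_swap hI2
      _ = _ := by
          congr 1; funext w; rw [integral_mul_const]
  have hA : Integrable (fun w => (∫ y in dyadCube j x, g (y - w)) * Ψ w) := by
    have := hI2.integral_prod_right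
    simp only [integral_mul_const] at this
    exact this
  have hBi : Integrable (fun w => (∫ y in dyadCube j x, g y) * Ψ w) := Ψ.integrable.const_mul _
  have hfin : ∫ y in dyadCube j x, g y =
      ∫ w, ((∫ y in dyadCube j x, g (y - w)) - ∫ y in dyadCube j x, g y) * Ψ w := by
    simp_rw [sub_mul]
    rw [integral_sub hA hBi, integral_const_mul, hΨ, mul_zero, sub_zero]
    exact hswap
  have hbound : ‖∫ y in dyadCube j x, g y‖ₑ ≤
      (c2 * (ENNReal.ofReal ((2:ℝ) ^ (-j)) ^ d * ENNReal.ofReal ((2:ℝ) ^ j) ^ (1 - 1 / r)) * M ^ (1 / r)) * I := by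
    rw [hfin]
    refine (enorm_integral_le_lintegral_enorm _).trans ?_
    rw [hI]
    have hm : Measurable fun w : Vd d => ‖Ψ w‖ₑ * ENNReal.ofReal ((1 + ‖w‖) ^ (d + 1)) :=
      Ψ.continuous.enorm.measurable.mul
        (by fun_prop : Measurable fun w : Vd d => (1 + ‖w‖) ^ (d + 1)).ennreal_ofReal
    rw [← lintegral_const_mul _ hm]
    refine lintegral_mono fun w => ?_
    rw [enorm_mul]
    calc _ ≤ _ := mul_le_mul_left (shift_bound hr g hg b hb j hj x w) _
      _ = _ := by
        rw [← hc2]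
        ring
  rw [Ek, enorm_smul, Real.enorm_of_nonneg (by positivity)]
  calc _ ≤ ENNReal.ofReal ((2:ℝ) ^ (j * (d:ℤ))) * ((c2 * (ENNReal.ofReal ((2:ℝ) ^ (-j)) ^ d *
        ENNReal.ofReal ((2:ℝ) ^ j) ^ (1 - 1 / r)) * M ^ (1 / r)) * I) := by gcongr
    _ = (ENNReal.ofReal ((2:ℝ) ^ (j * (d:ℤ))) * ENNReal.ofReal ((2:ℝ) ^ (-j)) ^ d) *
        (c2 * I * ENNReal.ofReal ((2:ℝ) ^ j) ^ (1 - 1 / r) * M ^ (1 / r)) := by ring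
    _ = _ := by rw [Ek_const_aux, one_mul]

/-- the geometric weight -/
def wt (r : ℝ) (j : ℤ) : ℝ≥0∞ := ENNReal.ofReal ((2:ℝ) ^ (-((1 - 1 / r) * |(j:ℝ)|)))

lemma wt_neg_eq {r : ℝ} (j : ℤ) (hj : j ≤ 0) (hr : 1 < r) :
    ENNReal.ofReal ((2:ℝ) ^ j) ^ (1 - 1 / r) = wt r j := by
  have hr0 : 0 < r := by linarith
  have he0 : 0 ≤ 1 - 1 / r := by
    rw [sub_nonneg, div_le_one hr0]; exact hr.le
  rw [wt, ENNReal.ofReal_rpow_of_nonneg (by positivity) he0, ← Real.rpow_intCast,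
    ← Real.rpow_mul (by norm_num), abs_of_nonpos (by exact_mod_cast hj)]
  congr 2
  ring

lemma wt_pos_ge {r : ℝ} (j : ℤ) (hj : 0 ≤ j) (hr : 1 < r) :
    ENNReal.ofReal ((2:ℝ) ^ (-j)) ≤ wt r j := by
  have hr0 : 0 < r := by linarith
  have hj' : (0:ℝ) ≤ j := by exact_mod_cast hj
  have h2 : 0 < 1 / r := by positivity
  rw [wt, ← Real.rpow_intCast, abs_of_nonneg hj']
  apply ENNReal.ofReal_le_ofReal
  apply Real.rpow_le_rpow_of_exponent_le (by norm_num)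
  push_cast
  nlinarith

lemma wt_succ {r : ℝ} (j : ℤ) (hr : 1 < r) : wt r (j + 1) ≤ 2 * wt r j := by
  have hr0 : 0 < r := by linarith
  have h2 : 0 < 1 / r := by positivity
  have he0 : 0 ≤ 1 - 1 / r := by
    rw [sub_nonneg, div_le_one hr0]; exact hr.le
  have h3 : |(j:ℝ)| ≤ |(j:ℝ) + 1| + 1 := by
    have := abs_sub (j + 1 : ℝ) 1
    simpa using this
  rw [wt, wt, ← ENNReal.ofReal_ofNat, ← ENNReal.ofReal_mul (by norm_num)]
  apply ENNReal.ofReal_le_ofReal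
  calc _ ≤ (2:ℝ) ^ (1 + -((1 - 1 / r) * |(j:ℝ)|)) := by
        apply Real.rpow_le_rpow_of_exponent_le (by norm_num)
        push_cast
        nlinarith
    _ = _ := by rw [Real.rpow_add (by norm_num), Real.rpow_one]

lemma step2 {d : ℕ} {r : ℝ} (hr : 1 < r) (Ψ : SchwartzMap (Vd d) ℂ) (hΨ : ∫ w, Ψ w = 0) :
    ∃ C : ℝ≥0∞, C ≠ ∞ ∧ ∀ g : Vd d → ℂ, Continuous g → (∃ b : ℝ, ∀ x, ‖g x‖ ≤ b) →
      (∀ y, ∫ z, g z * Ψ (y - z) = g y) → ∀ (j : ℤ) (x : Vd d),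
      ‖Ek (j + 1) g x - Ek j g x‖ₑ ≤ C * wt r j *
        (HLMax (fun z => ‖g z‖ₑ ^ r) x) ^ (1 / r) := by
  obtain ⟨Ca, hCa, ha⟩ := step2a hr Ψ
  obtain ⟨Cb, hCb, hb⟩ := step2b hr Ψ hΨ
  refine ⟨3 * (Ca + Cb), ENNReal.mul_ne_top (by simp) (ENNReal.add_ne_top.2 ⟨hCa, hCb⟩), ?_⟩
  intro g hg hbd hrep j x
  set M := (HLMax (fun z => ‖g z‖ₑ ^ r) x) ^ (1 / r)
  rcases lt_or_ge j 0 with hj | hj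
  · have h1 := hb g hg hbd hrep (j + 1) x (by omega)
    have h2 := hb g hg hbd hrep j x hj.le
    rw [wt_neg_eq _ (by omega) hr] at h1 h2
    calc _ ≤ ‖Ek (j + 1) g x‖ₑ + ‖Ek j g x‖ₑ := enorm_sub_le
      _ ≤ Cb * (2 * wt r j) * M + Cb * wt r j * M := by
          refine add_le_add (h1.trans ?_) h2
          gcongr
          exact wt_succ j hr
      _ = 3 * (0 + Cb) * wt r j * M := by ring
      _ ≤ _ := by gcongr; simp
  · have h1 := ha g hg hbd hrep (j + 1) x (by omega)
    have h2 := ha g hg hbd hrep j x hj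
    have e : Ek (j + 1) g x - Ek j g x = (Ek (j + 1) g x - g x) - (Ek j g x - g x) := by ring
    rw [e]
    calc _ ≤ ‖Ek (j + 1) g x - g x‖ₑ + ‖Ek j g x - g x‖ₑ := enorm_sub_le
      _ ≤ Ca * (2 * wt r j) * M + Ca * wt r j * M := by
          refine add_le_add (h1.trans ?_) (h2.trans ?_)
          · gcongr
            exact (wt_pos_ge (j + 1) (by omega) hr).trans (wt_succ j hr)
          · gcongr
            exact wt_pos_ge j hj hr
      _ = 3 * (Ca + 0) * wt r j * M := by ring
      _ ≤ _ := by gcongr; simp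

lemma FTinv_cont {d : ℕ} (a : Vd d → ℂ) (ha : Integrable a) : Continuous (FTinv a) := by
  unfold FTinv
  refine continuous_of_dominated (bound := fun ξ => ‖a ξ‖) ?_ ?_ ha.norm ?_
  · intro x
    refine AEStronglyMeasurable.mul ?_ ha.aestronglyMeasurable
    apply Continuous.aestronglyMeasurable
    fun_prop
  · intro x
    filter_upwards with ξ
    rw [norm_mul, norm_exp_aux, one_mul]
  · filter_upwards with ξ
    fun_prop

lemma FTinv_bdd {d : ℕ} (a : Vd d → ℂ) (x : Vd d) : ‖FTinv a x‖ ≤ ∫ ξ, ‖a ξ‖ := by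
  refine (norm_integral_le_integral_norm _).trans (le_of_eq ?_)
  congr 1
  funext ξ
  rw [norm_mul, norm_exp_aux, one_mul]

open FourierTransform in
lemma exists_schwartz {d : ℕ} (v : Vd d → ℂ) (hv : ContDiff ℝ (⊤ : ℕ∞) v)
    (hc : HasCompactSupport v) :
    ∃ U : SchwartzMap (Vd d) ℂ, (U : Vd d → ℂ) = FTinv v ∧ FT (U : Vd d → ℂ) = v := by
  set V : SchwartzMap (Vd d) ℂ := hc.toSchwartzMap hv with hV
  have hVc : (V : Vd d → ℂ) = v := by ext x; simp [hV]
  refine ⟨𝓕⁻ V, ?_, ?_⟩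
  · rw [SchwartzMap.fourierInv_coe, hVc, FTinv_eq]
  · rw [FT_eq, ← SchwartzMap.fourier_coe, FourierTransform.fourier_fourierInv_eq, hVc]

/-- The `ℓ`-sum appearing in the `Y` norm. -/
def bsum {d : ℕ} (r : ℝ) (η0 : Vd d → ℝ) (K : Vd d → ℂ) : ℝ≥0∞ :=
  ∑' ℓ : ℕ, ENNReal.ofReal ((2:ℝ) ^ ((ℓ : ℝ) * ((d : ℝ) / r))) *
        eLpNorm (fun x => (etaFam η0 ℓ x : ℂ) * K x) (ENNReal.ofReal (r / (r - 1))) volume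

lemma core {d : ℕ} {r : ℝ} (hr : 1 < r)
    (φ : Vd d → ℝ) (hφ : Continuous φ) (hφc : HasCompactSupport φ)
    (η0 : Vd d → ℝ) (hη0 : Continuous η0)
    (hη01 : ∀ x : Vd d, ‖x‖ ≤ 1/2 → η0 x = 1)
    (hη0s : Function.support η0 ⊆ closedBall 0 1)
    (ψ : Vd d → ℝ) (hψ : ContDiff ℝ (⊤ : ℕ∞) ψ) (hψc : HasCompactSupport ψ)
    (hψ0 : ψ 0 = 0) (hψ1 : ∀ ξ, φ ξ ≠ 0 → ψ ξ = 1) :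
    ∃ C : ℝ≥0∞, C ≠ ∞ ∧ ∀ (m : Vd d → ℂ), Measurable m → (∃ Bm : ℝ, ∀ ξ, ‖m ξ‖ ≤ Bm) →
      ∀ h : Vd d → ℂ, ContDiff ℝ (⊤ : ℕ∞) h →
      bsum r η0 (FTinv (fun ξ => (φ ξ : ℂ) * m ξ)) ≠ ∞ → ∀ (j : ℤ) (x : Vd d),
      ‖Ek (j + 1) (FTinv (fun ξ => (φ ξ : ℂ) * m ξ * h ξ)) x -
        Ek j (FTinv (fun ξ => (φ ξ : ℂ) * m ξ * h ξ)) x‖ₑ ≤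
      C * bsum r η0 (FTinv (fun ξ => (φ ξ : ℂ) * m ξ)) * (wt r j *
        (HLMax (HLMax (HLMax (fun y => ‖FTinv (fun ξ => (ψ ξ : ℂ) * h ξ) y‖ₑ ^ r))) x) ^ (1 / r)) := by
  have hr0 : 0 < r := by linarith
  have hψC : ContDiff ℝ (⊤ : ℕ∞) (fun ξ => (ψ ξ : ℂ)) := Complex.ofRealCLM.contDiff.comp hψ
  have hψCc : HasCompactSupport (fun ξ => (ψ ξ : ℂ)) :=
    hψc.comp_left (g := fun t : ℝ => (t : ℂ)) (by simp)
  obtain ⟨Ψ, hΨ1, hΨ2⟩ := exists_schwartz _ hψC hψCc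
  have hΨ0 : ∫ w, Ψ w = 0 := by
    have := congrFun hΨ2 0
    simpa [FT, hψ0] using this
  obtain ⟨C2, hC2, h2⟩ := step2 hr Ψ hΨ0
  refine ⟨C2 * c1 d r * (2 ^ d) ^ (1 / r), ?_, ?_⟩
  · refine ENNReal.mul_ne_top (ENNReal.mul_ne_top hC2 (c1_top d r hr)) ?_
    exact ENNReal.rpow_ne_top_of_nonneg (by positivity) (by simp)
  intro m hm ⟨Bm, hBm⟩ h hh hbt j x
  set a : Vd d → ℂ := fun ξ => (φ ξ : ℂ) * m ξ with ha
  have hφC : Continuous (fun ξ => (φ ξ : ℂ)) := Complex.continuous_ofReal.comp hφ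
  have hφCc : HasCompactSupport (fun ξ => (φ ξ : ℂ)) :=
    hφc.comp_left (g := fun t : ℝ => (t : ℂ)) (by simp)
  have hai : Integrable a := by
    have := (hφC.integrable_of_hasCompactSupport (μ := volume) hφCc).bdd_mul (c := Bm)
      hm.aestronglyMeasurable (by filter_upwards with ξ using hBm ξ)
    simpa [ha, mul_comm] using this
  have hahi : Integrable (fun ξ => a ξ * h ξ) := by
    have := ((hφC.mul hh.continuous).integrable_of_hasCompactSupport (μ := volume)
      hφCc.mul_right).bdd_mul (c := Bm)
      hm.aestronglyMeasurable (by filter_upwards with ξ using hBm ξ)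
    refine this.congr ?_
    filter_upwards with ξ
    simp only [ha, Pi.mul_apply]
    ring
  have haψ : ∀ ξ, a ξ * (ψ ξ : ℂ) = a ξ := by
    intro ξ
    by_cases h0 : φ ξ = 0
    · simp [ha, h0]
    · simp [hψ1 ξ h0]
  set g : Vd d → ℂ := FTinv (fun ξ => a ξ * h ξ) with hg
  obtain ⟨U, hU1, hU2⟩ := exists_schwartz (fun ξ => (ψ ξ : ℂ) * h ξ) (hψC.mul hh) hψCc.mul_right
  have hconv1 : ∀ y, ∫ z, FTinv a z * U (y - z) = g y := by
    intro y
    rw [conv_lemma a U hai U.integrable, hU2, hg]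
    congr 1
    funext ξ
    rw [← mul_assoc, haψ]
  have hconv2 : ∀ y, ∫ z, g z * Ψ (y - z) = g y := by
    intro y
    rw [hg, conv_lemma _ Ψ hahi Ψ.integrable, hΨ2]
    congr 1
    funext ξ
    rw [mul_right_comm, haψ]
  have hgc : Continuous g := FTinv_cont _ hahi
  have hstep2 := h2 g hgc ⟨_, fun x => FTinv_bdd _ x⟩ hconv2 j x
  set b := bsum r η0 (FTinv a) with hb
  rw [← hU1]
  set M1 := HLMax (fun y => ‖U y‖ₑ ^ r) with hM1
  have hgb : ∀ y, ‖g y‖ₑ ^ r ≤ (c1 d r * b) ^ r * M1 y := by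
    intro y
    have h3 : ‖g y‖ₑ ≤ c1 d r * b * (M1 y) ^ (1 / r) := by
      rw [← hconv1 y]
      refine (enorm_integral_le_lintegral_enorm _).trans ?_
      simp_rw [enorm_mul]
      exact step1 hr η0 hη0 hη01 hη0s _ U (FTinv_cont a hai) U.continuous y
    calc _ ≤ (c1 d r * b * (M1 y) ^ (1 / r)) ^ r := by gcongr
      _ = _ := by
        rw [ENNReal.mul_rpow_of_nonneg _ _ hr0.le, ← ENNReal.rpow_mul, one_div_mul_cancel hr0.ne',
          ENNReal.rpow_one]
  have hcb : (c1 d r * b) ^ r ≠ ∞ :=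
    ENNReal.rpow_ne_top_of_nonneg hr0.le (ENNReal.mul_ne_top (c1_top d r hr) hbt)
  have hM : HLMax (fun z => ‖g z‖ₑ ^ r) x ≤ (c1 d r * b) ^ r * (2 ^ d * HLMax (HLMax M1) x) :=
    (HLMax_mono hgb x).trans ((HLMax_const_mul_le _ hcb _ x).trans
      (mul_le_mul_right (HLMax_le_HLMax2 M1 x) _))
  refine hstep2.trans ?_
  have hr' : 0 ≤ 1 / r := by positivity
  calc _ ≤ C2 * wt r j * ((c1 d r * b) ^ r * (2 ^ d * HLMax (HLMax M1) x)) ^ (1 / r) := by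
        gcongr
    _ = _ := by
        rw [ENNReal.mul_rpow_of_nonneg _ _ hr', ENNReal.mul_rpow_of_nonneg _ _ hr',
          ← ENNReal.rpow_mul, mul_one_div_cancel hr0.ne', ENNReal.rpow_one]
        ring


lemma FTinv_scale {d : ℕ} (a : Vd d → ℂ) {s : ℝ} (hs : 0 < s) (x : Vd d) :
    FTinv a x = FTinv (fun ξ => ((s ^ d : ℝ) : ℂ) * a (s • ξ)) (s • x) := by
  unfold FTinv
  have h := Measure.integral_comp_smul (volume : Measure (Vd d))
    (fun ξ => Complex.exp ((2 * Real.pi * ⟪ξ, x⟫) * Complex.I) * a ξ) s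
  have h2 : (fun ξ : Vd d => Complex.exp ((2 * Real.pi * ⟪ξ, s • x⟫) * Complex.I) *
      (((s ^ d : ℝ) : ℂ) * a (s • ξ))) = fun ξ => ((s ^ d : ℝ) : ℂ) *
      (Complex.exp ((2 * Real.pi * ⟪s • ξ, x⟫) * Complex.I) * a (s • ξ)) := by
    funext ξ
    rw [real_inner_smul_left, real_inner_smul_right]
    ring
  rw [h2, integral_const_mul, h, finrank_euclideanSpace_fin, abs_of_pos (by positivity),
    Complex.real_smul, ← mul_assoc, ← Complex.ofReal_mul, mul_inv_cancel₀ (by positivity)]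
  simp

open scoped Pointwise in
lemma Ek_scale {d : ℕ} (g : Vd d → ℂ) (k n : ℤ) (x : Vd d) :
    Ek k (fun y => g ((2:ℝ) ^ n • y)) x = Ek (k - n) g ((2:ℝ) ^ n • x) := by
  have hs : (0:ℝ) < 2 ^ n := by positivity
  unfold Ek
  have h1 : (2:ℝ) ^ n • dyadCube k x = dyadCube (k - n) ((2:ℝ) ^ n • x) := by
    ext y
    rw [Set.mem_smul_set_iff_inv_smul_mem₀ hs.ne']
    simp only [dyadCube, Set.mem_ofPred_eq]
    refine forall_congr' fun i => ?_
    have e1 : (2:ℝ) ^ k * (((2:ℝ) ^ n)⁻¹ • y) i = (2:ℝ) ^ (k - n) * y i := by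
      rw [PiLp.smul_apply, smul_eq_mul, zpow_sub₀ (by norm_num)]; ring
    have e2 : (2:ℝ) ^ (k - n) * ((2:ℝ) ^ n • x) i = (2:ℝ) ^ k * x i := by
      rw [PiLp.smul_apply, smul_eq_mul, zpow_sub₀ (by norm_num)]; field_simp
    rw [e1, e2]
  rw [Measure.setIntegral_comp_smul_of_pos _ g _ hs, h1, finrank_euclideanSpace_fin, smul_smul]
  congr 1
  rw [← zpow_natCast, ← zpow_mul, ← zpow_neg, ← zpow_add₀ (by norm_num)]
  congr 1
  ring

lemma ennreal_two_mul_le (a b : ℝ≥0∞) : 2 * a * b ≤ a ^ 2 + b ^ 2 := by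
  rcases le_total a b with h | h
  · obtain ⟨c, rfl⟩ := exists_add_of_le h
    calc 2 * a * (a + c) ≤ 2 * a * (a + c) + c ^ 2 := le_self_add
      _ = _ := by ring
  · obtain ⟨c, rfl⟩ := exists_add_of_le h
    calc 2 * (b + c) * b ≤ 2 * (b + c) * b + c ^ 2 := le_self_add
      _ = _ := by ring

lemma sum_sq_le {ι : Type*} (w a : ι → ℝ≥0∞) :
    (∑' n, w n * a n) ^ 2 ≤ (∑' n, w n) * ∑' n, w n * a n ^ 2 := by
  have h1 : (∑' n, w n * a n) ^ 2 = ∑' n, ∑' p, (w n * a n) * (w p * a p) := by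
    rw [sq, ← ENNReal.tsum_mul_right]
    simp_rw [ENNReal.tsum_mul_left]
  have h2 : (∑' n, w n) * ∑' n, w n * a n ^ 2 = ∑' n, ∑' p, w n * (w p * a p ^ 2) := by
    rw [← ENNReal.tsum_mul_right]
    simp_rw [ENNReal.tsum_mul_left]
  have h3 : (∑' n, w n) * ∑' n, w n * a n ^ 2 = ∑' n, ∑' p, w n * a n ^ 2 * w p := by
    rw [mul_comm, ← ENNReal.tsum_mul_right]
    simp_rw [ENNReal.tsum_mul_left]
  have h4 : 2 * (∑' n, w n * a n) ^ 2 ≤ 2 * ((∑' n, w n) * ∑' n, w n * a n ^ 2) := by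
    rw [two_mul ((∑' n, w n) * _)]
    nth_rewrite 1 [h2]
    rw [h3, h1, ← ENNReal.tsum_add, ← ENNReal.tsum_mul_left]
    refine ENNReal.tsum_le_tsum fun n => ?_
    rw [← ENNReal.tsum_add, ← ENNReal.tsum_mul_left]
    refine ENNReal.tsum_le_tsum fun p => ?_
    have := ennreal_two_mul_le (a n) (a p)
    calc _ = w n * w p * (2 * a n * a p) := by ring
      _ ≤ w n * w p * (a n ^ 2 + a p ^ 2) := by gcongr
      _ = _ := by ring
  exact (ENNReal.mul_le_mul_iff_right (a := 2) (by simp) (by simp)).1 h4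

lemma young_aux (w a : ℤ → ℝ≥0∞) :
    ∑' k : ℕ, (∑' n : ℤ, w (k - n) * a n) ^ 2 ≤ (∑' j, w j) ^ 2 * ∑' n, a n ^ 2 := by
  have hsub : ∀ k : ℤ, ∑' n, w (k - n) = ∑' j, w j := fun k =>
    (Equiv.subLeft k).tsum_eq w
  have hsub2 : ∀ n : ℤ, ∑' k : ℕ, w ((k:ℤ) - n) ≤ ∑' j, w j := fun n => by
    rw [← (Equiv.subRight n).tsum_eq w]
    exact ENNReal.tsum_comp_le_tsum_of_injective (f := fun k : ℕ => (k : ℤ))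
      Nat.cast_injective (fun k : ℤ => w (k - n))
  calc _ ≤ ∑' k : ℕ, (∑' j, w j) * ∑' n : ℤ, w (k - n) * a n ^ 2 := by
        refine ENNReal.tsum_le_tsum fun k => ?_
        rw [← hsub k]
        exact sum_sq_le _ _
    _ = (∑' j, w j) * ∑' n : ℤ, (∑' k : ℕ, w (k - n)) * a n ^ 2 := by
        rw [ENNReal.tsum_mul_left, ENNReal.tsum_comm]
        simp_rw [ENNReal.tsum_mul_right]
    _ ≤ (∑' j, w j) * ∑' n : ℤ, (∑' j, w j) * a n ^ 2 := by
        gcongr with n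
        exact hsub2 n
    _ = _ := by rw [ENNReal.tsum_mul_left]; ring

lemma wt_sum {r : ℝ} (hr : 1 < r) : ∑' j, wt r j ≠ ∞ := by
  have hr0 : 0 < r := by linarith
  have he : 0 < 1 - 1 / r := by
    rw [sub_pos, div_lt_one hr0]; exact hr
  have hnat : ∀ n : ℕ, (2:ℝ) ^ (-((1 - 1 / r) * |((n:ℤ):ℝ)|)) = ((2:ℝ) ^ (-(1 - 1 / r))) ^ n := by
    intro n
    rw [← Real.rpow_natCast, ← Real.rpow_mul (by norm_num)]
    congr 1
    rw [Int.cast_natCast, abs_of_nonneg (Nat.cast_nonneg n)]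
    ring
  have hg : Summable fun n : ℕ => ((2:ℝ) ^ (-(1 - 1 / r))) ^ n := by
    refine summable_geometric_of_lt_one (by positivity) ?_
    exact Real.rpow_lt_one_of_one_lt_of_neg (by norm_num) (by linarith)
  have hs : Summable fun j : ℤ => (2:ℝ) ^ (-((1 - 1 / r) * |(j:ℝ)|)) := by
    refine Summable.of_nat_of_neg ?_ ?_
    · simp_rw [hnat]; exact hg
    · have : ∀ n : ℕ, (2:ℝ) ^ (-((1 - 1 / r) * |((-(n:ℤ) : ℤ):ℝ)|)) =
          ((2:ℝ) ^ (-(1 - 1 / r))) ^ n := by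
        intro n
        rw [← hnat n]; simp
      simp_rw [this]; exact hg
  exact hs.tsum_ofReal_ne_top

/-- The frequency-localised pieces. -/
def Tn {d : ℕ} (φ : Vd d → ℝ) (F : Vd d → ℂ) (n : ℤ) : Vd d → ℂ :=
  FTinv (fun ξ => (φ ((2:ℝ) ^ (-n) • ξ) : ℂ) * F ξ)

lemma phi_sum {d : ℕ} (φ : Vd d → ℝ)
    (hφs : Function.support φ ⊆ {ξ : Vd d | 1/2 < ‖ξ‖ ∧ ‖ξ‖ < 2}) (P : ℝ≥0∞)
    (hP : ∀ ξ, ‖φ ξ‖ₑ ≤ P) (ξ : Vd d) (hξ : ξ ≠ 0) :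
    ∑' n : ℤ, ‖φ ((2:ℝ) ^ (-n) • ξ)‖ₑ ≤ 2 * P := by
  have hpos : 0 < ‖ξ‖ := norm_pos_iff.2 hξ
  set N := Int.log 2 ‖ξ‖ with hN
  have l1 : (2:ℝ) ^ N ≤ ‖ξ‖ := by
    have := Int.zpow_log_le_self (b := 2) (r := ‖ξ‖) (by norm_num) hpos
    exact_mod_cast this
  have l2 : ‖ξ‖ < (2:ℝ) ^ (N + 1) := by
    have := Int.lt_zpow_succ_log_self (b := 2) (by norm_num) ‖ξ‖
    exact_mod_cast this
  have hsupp : ∀ n ∉ ({N, N + 1} : Finset ℤ), ‖φ ((2:ℝ) ^ (-n) • ξ)‖ₑ = 0 := by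
    intro n hn
    rw [enorm_eq_zero]
    by_contra hne
    have h := hφs hne
    have hp : (0:ℝ) < 2 ^ n := by positivity
    simp only [Set.mem_ofPred_eq, norm_smul, zpow_neg, norm_inv, Real.norm_of_nonneg hp.le] at h
    have e1 : ‖ξ‖ < (2:ℝ) ^ (n + 1) := by
      have := (inv_mul_lt_iff₀ hp).1 h.2
      rwa [zpow_add_one₀ (by norm_num)]
    have e2 : (2:ℝ) ^ (n - 1) < ‖ξ‖ := by
      have := (lt_inv_mul_iff₀ hp).1 h.1
      rw [zpow_sub_one₀ (by norm_num)]; simpa using this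
    have f1 := (zpow_lt_zpow_iff_right₀ (by norm_num : (1:ℝ) < 2)).1 (l1.trans_lt e1)
    have f2 := (zpow_lt_zpow_iff_right₀ (by norm_num : (1:ℝ) < 2)).1 (e2.trans l2)
    apply hn
    simp only [Finset.mem_insert, Finset.mem_singleton]
    omega
  rw [tsum_eq_sum hsupp]
  calc _ ≤ ∑ n ∈ ({N, N + 1} : Finset ℤ), P := Finset.sum_le_sum fun n _ => hP _
    _ = 2 * P := by rw [Finset.sum_const, Finset.card_pair (by omega)]; simp

lemma Ek_sum {d : ℕ} (hd : 0 < d) (φ : Vd d → ℝ) (hφ : Continuous φ)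
    (hφc : HasCompactSupport φ)
    (hφs : Function.support φ ⊆ {ξ : Vd d | 1/2 < ‖ξ‖ ∧ ‖ξ‖ < 2})
    (hφ1 : ∀ ξ : Vd d, ξ ≠ 0 → HasSum (fun k : ℤ => φ ((2:ℝ) ^ (-k) • ξ)) 1)
    (F : Vd d → ℂ) (hF : Integrable F) (k : ℤ) (x : Vd d) :
    HasSum (fun n => Ek k (Tn φ F n) x) (Ek k (FTinv F) x) := by
  have : Nonempty (Fin d) := ⟨⟨0, hd⟩⟩
  obtain ⟨P, hP⟩ := hφ.bounded_above_of_compact_support hφc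
  have hPe : ∀ ξ, ‖φ ξ‖ₑ ≤ ENNReal.ofReal P := fun ξ => by
    rw [← ofReal_norm]; exact ENNReal.ofReal_le_ofReal (hP ξ)
  set a : ℤ → Vd d → ℂ := fun n ξ => (φ ((2:ℝ) ^ (-n) • ξ) : ℂ) * F ξ with ha
  have hai : ∀ n, Integrable (a n) := by
    intro n
    refine hF.bdd_mul (c := P) ?_ ?_
    · apply Continuous.aestronglyMeasurable
      fun_prop
    · filter_upwards with ξ
      simpa only [Complex.norm_real] using hP _
  have hae : ∀ᵐ ξ : Vd d, ξ ≠ 0 := by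
    have := measure_singleton (μ := (volume : Measure (Vd d))) 0
    rw [ae_iff]; simpa using this
  have hsumE : ∑' n, ∫⁻ ξ, ‖a n ξ‖ₑ ≠ ∞ := by
    rw [← lintegral_tsum fun n => (hai n).aestronglyMeasurable.enorm]
    have hle : ∫⁻ ξ, ∑' n, ‖a n ξ‖ₑ ≤ ∫⁻ ξ, 2 * ENNReal.ofReal P * ‖F ξ‖ₑ := by
      refine lintegral_mono_ae ?_
      filter_upwards [hae] with ξ hξ
      simp only [ha, enorm_mul]
      rw [ENNReal.tsum_mul_right]
      gcongr
      have := phi_sum φ hφs _ hPe ξ hξ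
      simpa [← ofReal_norm] using this
    refine (hle.trans_lt ?_).ne
    rw [lintegral_const_mul' _ _ (ENNReal.mul_ne_top (by simp) ofReal_ne_top)]
    exact ENNReal.mul_lt_top (ENNReal.mul_lt_top (by simp) ofReal_lt_top) hF.2
  have hnorm : ∀ n, ∫⁻ ξ, ‖a n ξ‖ₑ = ENNReal.ofReal (∫ ξ, ‖a n ξ‖) := fun n =>
    (ofReal_integral_norm_eq_lintegral_enorm (hai n)).symm
  have hS : Summable fun n => ∫ ξ, ‖a n ξ‖ := by
    have := ENNReal.summable_toReal hsumE
    refine this.congr fun n => ?_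
    rw [hnorm, ENNReal.toReal_ofReal (integral_nonneg fun _ => norm_nonneg _)]
  have hpt : ∀ y, HasSum (fun n => Tn φ F n y) (FTinv F y) := by
    intro y
    have h := hasSum_integral_of_summable_integral_norm (μ := volume)
      (F := fun n ξ => Complex.exp ((2 * Real.pi * ⟪ξ, y⟫) * Complex.I) * a n ξ) ?_ ?_
    · have e : ∫ ξ, ∑' n, Complex.exp ((2 * Real.pi * ⟪ξ, y⟫) * Complex.I) * a n ξ = FTinv F y := by
        unfold FTinv
        refine integral_congr_ae ?_
        filter_upwards [hae] with ξ hξ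
        have h1 := (Complex.hasSum_ofReal.2 (hφ1 ξ hξ)).mul_right (F ξ)
        have h2 := h1.mul_left (Complex.exp ((2 * Real.pi * ⟪ξ, y⟫) * Complex.I))
        rw [h2.tsum_eq]; simp
      rw [e] at h
      exact h
    · intro n
      refine (hai n).bdd_mul (c := 1) ?_ ?_
      · apply Continuous.aestronglyMeasurable
        fun_prop
      · filter_upwards with ξ
        rw [norm_exp_aux]
    · refine hS.congr fun n => ?_
      congr 1
      funext ξ
      change ‖a n ξ‖ = ‖_ * a n ξ‖
      rw [norm_mul (Complex.exp _), norm_exp_aux, one_mul]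
  have hv : volume (dyadCube k x) ≠ ∞ := by
    rw [vol_dyadCube]; exact ENNReal.pow_ne_top ofReal_ne_top
  have hTi : ∀ n, IntegrableOn (Tn φ F n) (dyadCube k x) := fun n =>
    intOn_dyadCube k x _ (FTinv_cont _ (hai n)) _ (fun y => FTinv_bdd _ y)
  have h := hasSum_integral_of_summable_integral_norm (μ := volume.restrict (dyadCube k x))
    (F := fun n y => Tn φ F n y) hTi ?_
  · have e : ∀ y, ∑' n, Tn φ F n y = FTinv F y := fun y => (hpt y).tsum_eq
    simp_rw [e] at h
    exact h.const_smul ((2:ℝ) ^ (k * (d : ℤ)))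
  · refine Summable.of_nonneg_of_le (fun n => integral_nonneg fun _ => norm_nonneg _) (fun n => ?_)
      (hS.mul_left (volume.real (dyadCube k x)))
    calc _ ≤ ∫ y in dyadCube k x, ∫ ξ, ‖a n ξ‖ := by
          refine integral_mono (hTi n).norm (integrableOn_const hv) fun y => FTinv_bdd _ y
      _ = _ := by rw [setIntegral_const, smul_eq_mul]


open FourierTransform in
lemma FT_smooth {d : ℕ} (f : SchwartzMap (Vd d) ℂ) : ContDiff ℝ (⊤ : ℕ∞) (FT (f : Vd d → ℂ)) := by
  rw [FT_eq, ← SchwartzMap.fourier_coe]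
  exact (𝓕 f).smooth _

open FourierTransform in
lemma FT_integrable {d : ℕ} (f : SchwartzMap (Vd d) ℂ) : Integrable (FT (f : Vd d → ℂ)) := by
  rw [FT_eq, ← SchwartzMap.fourier_coe]
  exact (𝓕 f).integrable

lemma piece {d : ℕ} {r : ℝ} (hr : 1 < r)
    (φ : Vd d → ℝ) (hφ : Continuous φ) (hφc : HasCompactSupport φ)
    (η0 : Vd d → ℝ) (hη0 : Continuous η0)
    (hη01 : ∀ x : Vd d, ‖x‖ ≤ 1/2 → η0 x = 1)
    (hη0s : Function.support η0 ⊆ closedBall 0 1)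
    (ψ : Vd d → ℝ) (hψ : ContDiff ℝ (⊤ : ℕ∞) ψ) (hψc : HasCompactSupport ψ)
    (hψ0 : ψ 0 = 0) (hψ1 : ∀ ξ, φ ξ ≠ 0 → ψ ξ = 1) :
    ∃ C : ℝ≥0∞, C ≠ ∞ ∧ ∀ (m : Vd d → ℂ) (B : ℝ), Measurable m → (∃ Bm : ℝ, ∀ ξ, ‖m ξ‖ ≤ Bm) →
      Ynorm φ (etaFam η0) (ENNReal.ofReal (r / (r - 1))) ((d : ℝ) / r) m ≤ ENNReal.ofReal B →
      ∀ h : Vd d → ℂ, ContDiff ℝ (⊤ : ℕ∞) h → ∀ (n k : ℤ) (x : Vd d),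
      ‖Ek (k + 1) (Tn φ (fun ξ => m ξ * h ξ) n) x - Ek k (Tn φ (fun ξ => m ξ * h ξ) n) x‖ₑ ≤
      C * ENNReal.ofReal B * (wt r (k - n) *
        (HLMax (HLMax (HLMax (fun y => ‖FTinv (fun ξ => (ψ ((2:ℝ) ^ (-n) • ξ) : ℂ) * h ξ) y‖ₑ ^ r))) x)
          ^ (1 / r)) := by
  obtain ⟨C, hC, hcore⟩ := core hr φ hφ hφc η0 hη0 hη01 hη0s ψ hψ hψc hψ0 hψ1
  refine ⟨C, hC, ?_⟩
  intro m B hm ⟨Bm, hBm⟩ hY h hh n k x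
  have hs : (0:ℝ) < 2 ^ n := by positivity
  set s : ℝ := 2 ^ n with hsd
  have hcancel : ∀ ξ : Vd d, (2:ℝ) ^ (-n) • s • ξ = ξ := by
    intro ξ
    rw [smul_smul, hsd, ← zpow_add₀ (by norm_num)]; simp
  set H : Vd d → ℂ := fun ξ => ((s ^ d : ℝ) : ℂ) * h (s • ξ) with hH
  set K : Vd d → ℂ := FTinv (fun ξ => (φ ξ : ℂ) * m (s • ξ)) with hK
  have hb : bsum r η0 K ≤ ENNReal.ofReal B := by
    refine le_trans ?_ hY
    exact le_iSup (fun k : ℤ => ∑' ℓ : ℕ, ENNReal.ofReal ((2:ℝ) ^ ((ℓ : ℝ) * ((d : ℝ) / r))) *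
      eLpNorm (Hkl φ (etaFam η0) m k ℓ) (ENNReal.ofReal (r / (r - 1))) volume) n
  have hT : Tn φ (fun ξ => m ξ * h ξ) n =
      fun y => FTinv (fun ξ => (φ ξ : ℂ) * m (s • ξ) * H ξ) (s • y) := by
    funext y
    rw [Tn, FTinv_scale _ hs]
    congr 1
    funext ξ
    rw [hcancel, hH]
    ring
  have hL : (fun y => FTinv (fun ξ => (ψ ((2:ℝ) ^ (-n) • ξ) : ℂ) * h ξ) y) =
      fun y => FTinv (fun ξ => (ψ ξ : ℂ) * H ξ) (s • y) := by
    funext y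
    rw [FTinv_scale _ hs]
    congr 1
    funext ξ
    rw [hcancel, hH]
    ring
  have hHs : ContDiff ℝ (⊤ : ℕ∞) H := by
    refine contDiff_const.mul (hh.comp ?_)
    exact contDiff_const_smul s
  have := hcore (fun ξ => m (s • ξ)) (hm.comp (measurable_const_smul s)) ⟨Bm, fun ξ => hBm _⟩ H hHs
    (ne_top_of_le_ne_top ofReal_ne_top hb) (k - n) (s • x)
  rw [hT, Ek_scale, Ek_scale, show k + 1 - n = k - n + 1 by ring]
  refine this.trans ?_
  have hmax := HLMax3_smul_le (fun y => ‖FTinv (fun ξ => (ψ ξ : ℂ) * H ξ) y‖ₑ ^ r) hs x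
  have hL2 : (fun y => ‖FTinv (fun ξ => (ψ ((2:ℝ) ^ (-n) • ξ) : ℂ) * h ξ) y‖ₑ ^ r) =
      fun y => ‖FTinv (fun ξ => (ψ ξ : ℂ) * H ξ) (s • y)‖ₑ ^ r := by
    funext y
    rw [congrFun hL y]
  rw [hL2]
  gcongr

/-- Lemma 3.1 (key pointwise square-function bound).  If `‖m‖_{Y(r',d/r)} ≤ B` then,
with `Tf = F^{-1}[m f^]`, `L_k f = F^{-1}[ψ(2^{-k}·) f^]`, `M = M∘M∘M` the threefold
Hardy–Littlewood maximal operator and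
`G_r(f) = (∑_k (M[|L_k f|^r])^{2/r})^{1/2}`, one has
`S(Tf)(x) ≤ A_r B G_r(f)(x)` pointwise a.e. -/
theorem stmt_14 {d : ℕ} (r : ℝ) (hr1 : 1 < r) (hr2 : r < 2)
    (φ : Vd d → ℝ) (hφ : ContDiff ℝ (⊤ : ℕ∞) φ)
    (hφs : Function.support φ ⊆ {ξ : Vd d | 1/2 < ‖ξ‖ ∧ ‖ξ‖ < 2})
    (hφ1 : ∀ ξ : Vd d, ξ ≠ 0 → HasSum (fun k : ℤ => φ ((2:ℝ) ^ (-k) • ξ)) 1)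
    (η0 : Vd d → ℝ) (hη0 : ContDiff ℝ (⊤ : ℕ∞) η0) (hη0c : HasCompactSupport η0)
    (hη0e : ∀ x, η0 (-x) = η0 x) (hη01 : ∀ x : Vd d, ‖x‖ ≤ 1/2 → η0 x = 1)
    (hη0s : Function.support η0 ⊆ closedBall 0 1)
    (ψ : Vd d → ℝ) (hψ : ContDiff ℝ (⊤ : ℕ∞) ψ) (hψc : HasCompactSupport ψ)
    (hψ0 : (0 : Vd d) ∉ tsupport ψ)
    (hψ1 : ∀ ξ ∈ tsupport φ, ψ ξ = 1) :
    ∃ A : ℝ, 0 < A ∧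
      ∀ (m : Vd d → ℂ) (B : ℝ), Measurable m → (∃ Bm : ℝ, ∀ ξ, ‖m ξ‖ ≤ Bm) →
        Ynorm φ (etaFam η0) (ENNReal.ofReal (r / (r - 1))) ((d : ℝ) / r) m ≤
          ENNReal.ofReal B →
        ∀ f : SchwartzMap (Vd d) ℂ,
          ∀ᵐ x : Vd d,
            sqFun (FTinv (fun ξ => m ξ * FT (f : Vd d → ℂ) ξ)) x ≤
              ENNReal.ofReal (A * B) *
                (∑' k : ℤ,
                  (HLMax (HLMax (HLMax (fun y =>
                    (‖FTinv (fun ξ => (ψ ((2:ℝ) ^ (-k) • ξ) : ℂ) *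
                        FT (f : Vd d → ℂ) ξ) y‖₊ : ℝ≥0∞) ^ r))) x) ^ (2 / r)) ^ (1/2 : ℝ) := by
  rcases Nat.eq_zero_or_pos d with hd | hd
  · subst hd
    refine ⟨1, one_pos, fun m B _ _ _ f => ?_⟩
    filter_upwards with x
    have hE : ∀ (k : ℤ) (g : Vd 0 → ℂ), Ek k g x = ∫ y, g y := by
      intro k g
      have : dyadCube k x = Set.univ := by
        ext y
        simp [dyadCube]
      simp [Ek, this]
    simp [sqFun, hE]
  have hr0 : 0 < r := by linarith
  have hφc : HasCompactSupport φ := by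
    refine HasCompactSupport.intro (isCompact_closedBall (0 : Vd d) 2) fun ξ hξ => ?_
    by_contra hne
    have h := (hφs hne).2
    apply hξ
    simpa using h.le
  obtain ⟨C, hC, hpiece⟩ := piece hr1 φ hφ.continuous hφc η0 hη0.continuous hη01 hη0s ψ hψ hψc
    (image_eq_zero_of_notMem_tsupport hψ0) (fun ξ hξ => hψ1 ξ (subset_tsupport φ hξ))
  set W := ∑' j, wt r j with hW
  have hWt : W ≠ ∞ := wt_sum hr1
  have hCW : C * W ≠ ∞ := ENNReal.mul_ne_top hC hWt
  refine ⟨(C * W).toReal + 1, by positivity, ?_⟩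
  intro m B hm hmb hY f
  filter_upwards with x
  obtain ⟨Bm, hBm⟩ := hmb
  set F : Vd d → ℂ := fun ξ => m ξ * FT (f : Vd d → ℂ) ξ with hF
  have hFi : Integrable F := by
    refine (FT_integrable f).bdd_mul (c := Bm) hm.aestronglyMeasurable ?_
    filter_upwards with ξ using hBm ξ
  set M : ℤ → ℝ≥0∞ := fun n => HLMax (HLMax (HLMax (fun y =>
    ‖FTinv (fun ξ => (ψ ((2:ℝ) ^ (-n) • ξ) : ℂ) * FT (f : Vd d → ℂ) ξ) y‖ₑ ^ r))) x with hM
  change (∑' k : ℕ, ‖Ek ((k : ℤ) + 1) (FTinv F) x - Ek (k : ℤ) (FTinv F) x‖ₑ ^ 2) ^ (1/2 : ℝ) ≤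
    ENNReal.ofReal (((C * W).toReal + 1) * B) * (∑' k : ℤ, M k ^ (2 / r)) ^ (1/2 : ℝ)
  have hD : ∀ k : ℤ, ‖Ek (k + 1) (FTinv F) x - Ek k (FTinv F) x‖ₑ ≤
      C * ENNReal.ofReal B * ∑' n : ℤ, wt r (k - n) * M n ^ (1 / r) := by
    intro k
    have h := (Ek_sum hd φ hφ.continuous hφc hφs hφ1 F hFi (k + 1) x).sub
      (Ek_sum hd φ hφ.continuous hφc hφs hφ1 F hFi k x)
    rw [← h.tsum_eq, ← ENNReal.tsum_mul_left]
    refine enorm_tsum_le_tsum_enorm.trans (ENNReal.tsum_le_tsum fun n => ?_)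
    exact hpiece m B hm ⟨Bm, hBm⟩ hY _ (FT_smooth f) n k x
  have hsum : ∑' k : ℕ, ‖Ek ((k : ℤ) + 1) (FTinv F) x - Ek (k : ℤ) (FTinv F) x‖ₑ ^ 2 ≤
      (C * W * ENNReal.ofReal B) ^ 2 * ∑' n : ℤ, M n ^ (2 / r) := by
    calc _ ≤ ∑' k : ℕ, (C * ENNReal.ofReal B) ^ 2 *
          (∑' n : ℤ, wt r (k - n) * M n ^ (1 / r)) ^ 2 := by
          refine ENNReal.tsum_le_tsum fun k => ?_
          rw [← mul_pow]
          exact pow_le_pow_left₀ zero_le (hD k) 2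
      _ ≤ (C * ENNReal.ofReal B) ^ 2 * (W ^ 2 * ∑' n : ℤ, (M n ^ (1 / r)) ^ 2) := by
          rw [ENNReal.tsum_mul_left]
          gcongr
          exact young_aux (wt r) fun n => M n ^ (1 / r)
      _ = _ := by
          have : ∀ n, (M n ^ (1 / r)) ^ 2 = M n ^ (2 / r) := fun n => by
            rw [← ENNReal.rpow_natCast, ← ENNReal.rpow_mul]
            congr 1
            push_cast
            ring
          simp_rw [this]
          ring
  calc _ ≤ ((C * W * ENNReal.ofReal B) ^ 2 * ∑' n : ℤ, M n ^ (2 / r)) ^ (1/2 : ℝ) := by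
        gcongr
    _ = C * W * ENNReal.ofReal B * (∑' n : ℤ, M n ^ (2 / r)) ^ (1/2 : ℝ) := by
        rw [ENNReal.mul_rpow_of_nonneg _ _ (by norm_num), ← ENNReal.rpow_natCast,
          ← ENNReal.rpow_mul]
        norm_num
    _ ≤ _ := by
        gcongr
        rw [ENNReal.ofReal_mul (by positivity)]
        gcongr
        calc C * W = ENNReal.ofReal (C * W).toReal := (ENNReal.ofReal_toReal hCW).symm
          _ ≤ _ := ENNReal.ofReal_le_ofReal (by linarith)
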